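/- arXiv:1211.6227 — 3 statements merged into one kernel-verified Lean document; each statement's English description precedes it below -/
import Mathlib

section
/- Let n ≥ 1, and let μ and ν be probability measures on ℝⁿ with bounded supports spt μ and spt ν, with μ absolutely continuous with respect to Lebesgue measure. Let u : ℝⁿ → ℝ be a convex function which is a Brenier solution of the optimal transportation problem with cost c(x,x̄) = −⟪x,x̄⟫ from μ to ν, in the sense that there exists a Borel map T : ℝⁿ → ℝⁿ with T(x) ∈ ∂u(x) for μ-almost every x and with push-forward T_#μ = ν. Assume moreover that there is a constant Λ > 0 such that Leb(∂u(E) ∩ spt ν) ≤ Λ · Leb(E) for every Borel set E ⊆ ℝⁿ. Then for every x ∈ ℝⁿ such that ∂u(x) ∩ interior(spt ν) ≠ ∅, the affine dimension of the convex set ∂u(x) is strictly less than n/2; i.e. 2 · finrank ℝ (vectorSpan ℝ (∂u(x))) < n. -/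
open RealInnerProductSpace MeasureTheory

/-- The subdifferential of `u : E → ℝ` at `x`:
`∂u(x) = {p ∈ E : u(y) ≥ u(x) + ⟪y − x, p⟫ for all y ∈ E}`. -/
def subdiff {E : Type*} [NormedAddCommGroup E] [InnerProductSpace ℝ E]
    (u : E → ℝ) (x : E) : Set E :=
  {p | ∀ y, u x + ⟪y - x, p⟫ ≤ u y}

/-- The image of a set under the subdifferential map: `∂u(A) = ⋃_{x ∈ A} ∂u(x)`. -/
def subdiffImage {E : Type*} [NormedAddCommGroup E] [InnerProductSpace ℝ E]
    (u : E → ℝ) (A : Set E) : Set E :=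
  ⋃ x ∈ A, subdiff u x

/-- The topological support of a measure: the set of points all of whose neighborhoods
have positive measure. -/
def msupport {α : Type*} [TopologicalSpace α] [MeasurableSpace α] (μ : Measure α) : Set α :=
  {x | ∀ U ∈ nhds x, μ U ≠ 0}

section
variable {E : Type*} [NormedAddCommGroup E] [InnerProductSpace ℝ E]

/-- The linear map scaling by `s` along `V` and by `t` along `Vᗮ`. -/
noncomputable def anisoScale (V : Submodule ℝ E) [V.HasOrthogonalProjection] (s t : ℝ) :
    E →ₗ[ℝ] E :=
  s • (V.starProjection : E →ₗ[ℝ] E) + t • (LinearMap.id - (V.starProjection : E →ₗ[ℝ] E))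

lemma anisoScale_apply (V : Submodule ℝ E) [V.HasOrthogonalProjection] (s t : ℝ) (z : E) :
    anisoScale V s t z = s • V.starProjection z + t • (z - V.starProjection z) := by
  simp [anisoScale]

lemma det_anisoScale [FiniteDimensional ℝ E] (V : Submodule ℝ E) (s t : ℝ) :
    LinearMap.det (anisoScale V s t)
      = s ^ Module.finrank ℝ V * t ^ Module.finrank ℝ Vᗮ := by
  set e := V.prodEquivOfIsCompl Vᗮ V.isCompl_orthogonal with he
  have h : anisoScale V s t = (e : (V × Vᗮ) →ₗ[ℝ] E) ∘ₗ
      (LinearMap.prodMap (s • LinearMap.id) (t • LinearMap.id)) ∘ₗ (e.symm : E →ₗ[ℝ] (V × Vᗮ)) := by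
    ext z
    obtain ⟨⟨a, b⟩, rfl⟩ := e.surjective z
    have h1 : V.starProjection (a : E) = a := Submodule.starProjection_eq_self_iff.2 a.2
    have h2 : V.starProjection (b : E) = 0 :=
      (Submodule.starProjection_apply_eq_zero_iff V).2 b.2
    simp [anisoScale_apply, he, h1, h2]
  rw [h, LinearMap.det_conj, LinearMap.det_prodMap, LinearMap.det_smul, LinearMap.det_smul]
  simp

lemma subdiff_conjugate_bound_of_mem_interior_closure [FiniteDimensional ℝ E] {u : E → ℝ}
    {D : Set E} (hD : ∀ p ∈ D, ∃ x, p ∈ subdiff u x) {p₀ : E}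
    (hp : p₀ ∈ interior (closure D)) :
    ∃ ρ > 0, ∃ C : ℝ, ∀ p ∈ Metric.closedBall p₀ ρ, ∀ x, ⟪x, p⟫ - C ≤ u x := by
  have hconv : ∀ C : ℝ, Convex ℝ {p : E | ∀ x, ⟪x, p⟫ - C ≤ u x} := by
    intro C p hp q hq a b ha hb hab x
    have h1 := mul_le_mul_of_nonneg_left (hp x) ha
    have h2 := mul_le_mul_of_nonneg_left (hq x) hb
    rw [inner_add_right, inner_smul_right, inner_smul_right]
    have hb' : b = 1 - a := by linarith
    subst hb'
    linarith
  set W : Set E := {p | ∃ C : ℝ, ∀ x, ⟪x, p⟫ - C ≤ u x} with hW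
  have hWc : Convex ℝ W := by
    rintro p ⟨C, hp⟩ q ⟨C', hq⟩ a b ha hb hab
    refine ⟨max C C', hconv _ (fun x => ?_) (fun x => ?_) ha hb hab⟩
    · linarith [hp x, le_max_left C C']
    · linarith [hq x, le_max_right C C']
  have hDW : D ⊆ W := by
    intro p hp
    obtain ⟨x, hx⟩ := hD p hp
    refine ⟨⟪x, p⟫ - u x, fun y => ?_⟩
    have := hx y
    rw [inner_sub_left] at this
    linarith
  have hpW : p₀ ∈ interior (closure W) := interior_mono (closure_mono hDW) hp
  have hne : (interior W).Nonempty := by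
    rw [hWc.interior_nonempty_iff_affineSpan_eq_top]
    have h2 : closure W ⊆ affineSpan ℝ W :=
      closure_minimal (subset_affineSpan ℝ W) (AffineSubspace.closed_of_finiteDimensional _)
    have h3 : affineSpan ℝ (closure W) = ⊤ :=
      hWc.closure.interior_nonempty_iff_affineSpan_eq_top.1 ⟨_, hpW⟩
    rw [eq_top_iff, ← h3]
    exact affineSpan_le.2 h2
  rw [hWc.interior_closure_eq_interior_of_nonempty_interior hne] at hpW
  obtain ⟨b, hb₁, hb₂⟩ := exists_mem_interior_convexHull_affineBasis
    (isOpen_interior.mem_nhds hpW)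
  have hbW : ∀ i, ∃ C : ℝ, ∀ x, ⟪x, b i⟫ - C ≤ u x := fun i =>
    show b i ∈ W from interior_subset (hb₂ (subset_convexHull ℝ _ ⟨i, rfl⟩))
  choose C hC using hbW
  obtain ⟨ρ, hρ, hball⟩ := Metric.nhds_basis_closedBall.mem_iff.1 (mem_interior_iff_mem_nhds.1 hb₁)
  obtain ⟨M, hM⟩ := (Set.finite_range C).bddAbove
  refine ⟨ρ, hρ, M, fun p hp => ?_⟩
  have : convexHull ℝ (Set.range b) ⊆ {p : E | ∀ x, ⟪x, p⟫ - M ≤ u x} := by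
    refine convexHull_min ?_ (hconv M)
    rintro _ ⟨i, rfl⟩ x
    linarith [hC i x, hM ⟨i, rfl⟩]
  exact this (hball hp)

lemma le_of_conjugate_bound {u : E → ℝ} {p₀ p x : E} {ρ C : ℝ} (hρ : 0 < ρ)
    (h : ∀ p ∈ Metric.closedBall p₀ ρ, ∀ x, ⟪x, p⟫ - C ≤ u x)
    (hp : p ∈ Metric.closedBall p₀ (ρ / 2)) : ρ / 2 * ‖x‖ - C ≤ u x - ⟪x, p⟫ := by
  rcases eq_or_ne x 0 with rfl | hx
  · have := h p (Metric.closedBall_subset_closedBall (by linarith) hp) 0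
    simp at this ⊢
    linarith
  · have hx' : ‖x‖ ≠ 0 := norm_ne_zero_iff.2 hx
    have := h (p + (ρ / 2 / ‖x‖) • x) ?_ x
    · rw [inner_add_right, inner_smul_right, real_inner_self_eq_norm_sq] at this
      have e : ρ / 2 / ‖x‖ * ‖x‖ ^ 2 = ρ / 2 * ‖x‖ := by field_simp
      rw [e] at this
      linarith
    · rw [mem_closedBall_iff_norm] at hp ⊢
      have e : ‖(ρ / 2 / ‖x‖) • x‖ = ρ / 2 := by
        rw [norm_smul, Real.norm_of_nonneg (by positivity)]; field_simp
      calc ‖p + (ρ / 2 / ‖x‖) • x - p₀‖ = ‖(p - p₀) + (ρ / 2 / ‖x‖) • x‖ := by congr 1; abel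
        _ ≤ ‖p - p₀‖ + ‖(ρ / 2 / ‖x‖) • x‖ := norm_add_le _ _
        _ ≤ ρ := by linarith

lemma exists_mem_subdiff_of_conjugate_bound [FiniteDimensional ℝ E] {u : E → ℝ}
    (hu : Continuous u) {p₀ p : E} {ρ C : ℝ} (hρ : 0 < ρ)
    (h : ∀ p ∈ Metric.closedBall p₀ ρ, ∀ x, ⟪x, p⟫ - C ≤ u x)
    (hp : p ∈ Metric.closedBall p₀ (ρ / 2)) : ∃ x, p ∈ subdiff u x := by
  have hc : Continuous fun x => u x - ⟪x, p⟫ := by fun_prop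
  obtain ⟨x, hx⟩ := hc.exists_forall_le' 0 (by
    have := (tendsto_norm_cocompact_atTop (E := E)).eventually_ge_atTop ((u 0 + C) / (ρ / 2))
    filter_upwards [this] with x hx
    rw [div_le_iff₀ (by positivity)] at hx
    have := le_of_conjugate_bound (x := x) hρ h hp
    simp
    linarith)
  refine ⟨x, fun y => ?_⟩
  have := hx y
  rw [inner_sub_left]
  linarith

lemma norm_le_of_conjugate_bound {u : E → ℝ} {p₀ p x : E} {ρ C : ℝ} (hρ : 0 < ρ)
    (h : ∀ p ∈ Metric.closedBall p₀ ρ, ∀ x, ⟪x, p⟫ - C ≤ u x)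
    (hp : p ∈ Metric.closedBall p₀ (ρ / 2)) (hx : p ∈ subdiff u x) :
    ‖x‖ ≤ (u 0 + C) / (ρ / 2) := by
  rw [le_div_iff₀ (by positivity)]
  have := le_of_conjugate_bound (x := x) hρ h hp
  have h0 := hx 0
  rw [zero_sub, inner_neg_left] at h0
  linarith

lemma convex_subdiff (u : E → ℝ) (x : E) : Convex ℝ (subdiff u x) := by
  intro p hp q hq a b ha hb hab y
  have h1 := mul_le_mul_of_nonneg_left (hp y) ha
  have h2 := mul_le_mul_of_nonneg_left (hq y) hb
  rw [inner_add_right, inner_smul_right, inner_smul_right]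
  have hb' : b = 1 - a := by linarith
  subst hb'
  linarith

lemma Convex.exists_forall_add_mem_of_mem_open [FiniteDimensional ℝ E] {S U : Set E}
    (hS : Convex ℝ S) (hU : IsOpen U) (hne : (S ∩ U).Nonempty) :
    ∃ p₀ ∈ U, ∃ ε > 0, ∀ a ∈ vectorSpan ℝ S, ‖a‖ ≤ ε → p₀ + a ∈ S := by
  obtain ⟨p, hpS, hpU⟩ := hne
  obtain ⟨s, hs⟩ := Set.Nonempty.intrinsicInterior hS ⟨p, hpS⟩
  obtain ⟨y, hy, rfl⟩ := mem_intrinsicInterior.1 hs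
  obtain ⟨ε, hε, hball⟩ := Metric.nhds_basis_closedBall.mem_iff.1 (mem_interior_iff_mem_nhds.1 hy)
  have hadd : ∀ a ∈ vectorSpan ℝ S, ‖a‖ ≤ ε → (y : E) + a ∈ S := by
    intro a ha hn
    have hmem : (y : E) + a ∈ affineSpan ℝ S := by
      have := AffineSubspace.vadd_mem_of_mem_direction
        (by rwa [direction_affineSpan] : a ∈ (affineSpan ℝ S).direction) y.2
      rwa [vadd_eq_add, add_comm] at this
    have : (⟨(y : E) + a, hmem⟩ : affineSpan ℝ S) ∈ Metric.closedBall y ε := by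
      rw [Metric.mem_closedBall, Subtype.dist_eq, dist_eq_norm]
      simpa using hn
    exact hball this
  have hy0 : (y : E) ∈ S := by simpa using hadd 0 (zero_mem _) (by simpa using hε.le)
  have hcont : Continuous fun t : ℝ => (1 - t) • p + t • (y : E) := by fun_prop
  have hev : ∀ᶠ t in nhdsWithin (0 : ℝ) (Set.Ioi 0), (1 - t) • p + t • (y : E) ∈ U :=
    nhdsWithin_le_nhds (hcont.continuousAt.eventually_mem (hU.mem_nhds (by simpa using hpU)))
  obtain ⟨t, htU, ht0, ht1⟩ := (hev.and (Ioo_mem_nhdsGT (zero_lt_one))).exists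
  refine ⟨_, htU, t * ε, by positivity, fun a ha hn => ?_⟩
  have := hS hpS (hadd (t⁻¹ • a) (Submodule.smul_mem _ _ ha) ?_) (by linarith : 0 ≤ 1 - t) ht0.le
    (by ring)
  · convert this using 1
    rw [smul_add, smul_smul, mul_inv_cancel₀ ht0.ne', one_smul, add_assoc]
  · rw [norm_smul, norm_inv, Real.norm_of_nonneg ht0.le, inv_mul_le_iff₀ ht0]
    exact hn

lemma mem_orthogonal_and_add_mem_subdiff {u : E → ℝ} {V : Submodule ℝ E} {x₀ x p₀ a : E} {ε : ℝ}
    (hdisc : ∀ a ∈ V, ‖a‖ ≤ ε → p₀ + a ∈ subdiff u x₀) (haV : a ∈ V) (ha : ‖a‖ < ε)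
    (hx : p₀ + a ∈ subdiff u x) :
    x - x₀ ∈ Vᗮ ∧ ∀ b ∈ V, ‖b‖ ≤ ε → p₀ + b ∈ subdiff u x := by
  have key : ∀ b ∈ V, ‖a + b‖ ≤ ε → ⟪x - x₀, b⟫ ≤ 0 := by
    intro b hb hn
    have h1 := hdisc _ (add_mem haV hb) hn x
    have h2 := hx x₀
    simp only [inner_add_right, inner_sub_left] at h1 h2 ⊢
    linarith
  have key2 : ∀ b ∈ V, ⟪x - x₀, b⟫ ≤ 0 := by
    intro b hb
    have hcont : Continuous fun t : ℝ => ‖a + t • b‖ := by fun_prop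
    have hev : ∀ᶠ t in nhdsWithin (0 : ℝ) (Set.Ioi 0), ‖a + t • b‖ < ε :=
      nhdsWithin_le_nhds (hcont.continuousAt.eventually_lt continuousAt_const (by simpa using ha))
    obtain ⟨t, ht, ht0⟩ := (hev.and self_mem_nhdsWithin).exists
    have := key (t • b) (V.smul_mem t hb) ht.le
    rw [inner_smul_right] at this
    exact nonpos_of_mul_nonpos_right this ht0
  have key3 : ∀ b ∈ V, ⟪x - x₀, b⟫ = 0 := by
    intro b hb
    have h1 := key2 _ (V.neg_mem hb)
    rw [inner_neg_right] at h1
    linarith [key2 b hb]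
  refine ⟨(Submodule.mem_orthogonal' V _).2 key3, fun b hb hbn y => ?_⟩
  have h1 := hdisc b hb hbn y
  have h2 := hx x₀
  have h3 := key3 a haV
  have h4 := key3 b hb
  simp only [inner_add_right, inner_sub_left] at h1 h2 h3 h4 ⊢
  linarith

lemma inner_sub_le_of_mem_subdiff {u : E → ℝ} {x y z p b d : E}
    (hx : p + d ∈ subdiff u x) (hy : p + b + d ∈ subdiff u y) (hz : p + b ∈ subdiff u z) :
    ⟪x - z, b⟫ ≤ ⟪y - z, d⟫ := by
  have h1 := hy x
  have h2 := hx z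
  have h3 := hz y
  simp only [inner_add_right, inner_sub_left] at *
  linarith

lemma isClosed_setOf_mem_subdiff {Z : Type*} [TopologicalSpace Z] {u : E → ℝ} (hu : Continuous u)
    {f g : Z → E} (hf : Continuous f) (hg : Continuous g) :
    IsClosed {z | g z ∈ subdiff u (f z)} := by
  have : {z | g z ∈ subdiff u (f z)} = ⋂ y, {z | u (f z) + ⟪y - f z, g z⟫ ≤ u y} := by
    ext; simp [subdiff]
  rw [this]
  exact isClosed_iInter fun y => isClosed_le (by fun_prop) continuous_const

lemma exists_farthest_of_mem_subdiff [FiniteDimensional ℝ E] {u : E → ℝ} (hu : Continuous u)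
    {x₀ p₀ : E} {M : ℝ} (hM : ∀ x, p₀ ∈ subdiff u x → ‖x‖ ≤ M) (h₀ : p₀ ∈ subdiff u x₀) :
    ∃ x₁, p₀ ∈ subdiff u x₁ ∧ ∀ x, p₀ ∈ subdiff u x → ‖x - x₀‖ ≤ ‖x₁ - x₀‖ := by
  have hK : IsCompact {x | p₀ ∈ subdiff u x} := by
    refine (isCompact_closedBall (0 : E) M).of_isClosed_subset
      (isClosed_setOf_mem_subdiff hu continuous_id continuous_const) fun x hx => ?_
    simpa using hM x hx
  obtain ⟨x₁, h1, h2⟩ := hK.exists_isMaxOn ⟨x₀, h₀⟩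
    (f := fun x => ‖x - x₀‖) (by fun_prop)
  exact ⟨x₁, h1, fun x hx => h2 hx⟩

lemma eventually_norm_sub_le_of_mem_subdiff [FiniteDimensional ℝ E] {u : E → ℝ}
    (hu : Continuous u) {V : Submodule ℝ E} {x₀ x₁ p₀ : E} {M ρ r ε δ : ℝ}
    (hM : ∀ p ∈ Metric.closedBall p₀ ρ, ∀ x, p ∈ subdiff u x → ‖x‖ ≤ M)
    (hdisc : ∀ a ∈ V, ‖a‖ ≤ ε → p₀ + a ∈ subdiff u x₀) (hr : 0 ≤ r) (hrε : r < ε) (hrρ : r < ρ)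
    (h₁ : p₀ ∈ subdiff u x₁) (hfar : ∀ x, p₀ ∈ subdiff u x → ‖x - x₀‖ ≤ ‖x₁ - x₀‖)
    (hδ : 0 < δ) :
    ∀ᶠ h in nhdsWithin (0 : ℝ) (Set.Ioi 0), ∀ a ∈ V, ‖a‖ ≤ r → ∀ w : E, ‖w‖ ≤ 1 → ∀ x,
      p₀ + a + h • ((x₁ - x₀) + δ • w) ∈ subdiff u x → ‖x - x₁‖ ≤ 3 * δ := by
  have hε : 0 < ε := hr.trans_lt hrε
  have h₁disc : ∀ b ∈ V, ‖b‖ ≤ ε → p₀ + b ∈ subdiff u x₁ :=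
    (mem_orthogonal_and_add_mem_subdiff hdisc V.zero_mem (by simpa using hε) (by simpa using h₁)).2
  set e := x₁ - x₀ with he
  let Q : Set (ℝ × E × E × E) :=
    {z | z.2.1 ∈ V ∧ p₀ + z.2.1 + z.1 • (e + δ • z.2.2.1) ∈ subdiff u z.2.2.2 ∧
      0 ≤ ⟪z.2.2.2 - x₁, e + δ • z.2.2.1⟫ ∧ 3 * δ ≤ ‖z.2.2.2 - x₁‖} ∩
    (Set.Icc 0 1 ×ˢ Metric.closedBall 0 r ×ˢ Metric.closedBall 0 1 ×ˢ Metric.closedBall 0 M)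
  have hQ : IsCompact Q := by
    refine IsCompact.inter_left (isCompact_Icc.prod ((isCompact_closedBall _ _).prod
      ((isCompact_closedBall _ _).prod (isCompact_closedBall _ _)))) ?_
    refine IsClosed.inter (V.closed_of_finiteDimensional.preimage (by fun_prop)) ?_
    refine IsClosed.inter (isClosed_setOf_mem_subdiff hu (by fun_prop) (by fun_prop)) ?_
    have h1 : IsClosed {z : ℝ × E × E × E | 0 ≤ ⟪z.2.2.2 - x₁, e + δ • z.2.2.1⟫} :=
      isClosed_le (by fun_prop) (by fun_prop)
    have h2 : IsClosed {z : ℝ × E × E × E | 3 * δ ≤ ‖z.2.2.2 - x₁‖} :=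
      isClosed_le (by fun_prop) (by fun_prop)
    exact h1.inter h2
  have hQpos : ∀ z ∈ Q, 0 < z.1 := by
    rintro ⟨h, a, w, x⟩ ⟨⟨haV, hx, hin, hge⟩, ⟨hh, -⟩, ha, hw, -⟩
    refine lt_of_le_of_ne hh fun h0 => ?_
    simp only [Metric.mem_closedBall, dist_zero_right] at h0 hx hin hge ha hw
    subst h0
    rw [zero_smul, add_zero] at hx
    have h2 := (mem_orthogonal_and_add_mem_subdiff hdisc haV (ha.trans_lt hrε) hx).2 0 V.zero_mem
      (by simpa using hε.le)
    rw [add_zero] at h2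
    have h3 := hfar x h2
    have h4 : ‖x - x₀‖ ^ 2 = ‖x - x₁‖ ^ 2 + 2 * ⟪x - x₁, e⟫ + ‖e‖ ^ 2 := by
      rw [← norm_add_sq_real, he]; congr 2; abel
    have h5 : ‖x - x₀‖ ^ 2 ≤ ‖e‖ ^ 2 := by gcongr
    rw [inner_add_right, inner_smul_right] at hin
    have h6 : ⟪x - x₁, w⟫ ≤ ‖x - x₁‖ := (real_inner_le_norm _ _).trans
      (mul_le_of_le_one_right (norm_nonneg _) hw)
    have h7 := mul_le_mul_of_nonneg_left h6 hδ.le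
    nlinarith
  have hsmall : ∃ η > 0, ∀ z ∈ Q, η ≤ z.1 := by
    rcases Q.eq_empty_or_nonempty with h | h
    · exact ⟨1, one_pos, by simp [h]⟩
    · obtain ⟨z, hz, hmin⟩ := hQ.exists_isMinOn h continuous_fst.continuousOn
      exact ⟨z.1, hQpos z hz, fun y hy => hmin hy⟩
  obtain ⟨η, hη, hmin⟩ := hsmall
  have hcont : Continuous fun h : ℝ => r + h * (‖e‖ + δ) := by fun_prop
  have hev : ∀ᶠ h in nhdsWithin (0 : ℝ) (Set.Ioi 0), r + h * (‖e‖ + δ) < ρ :=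
    nhdsWithin_le_nhds (hcont.continuousAt.eventually_lt continuousAt_const (by simpa using hrρ))
  filter_upwards [hev, Ioo_mem_nhdsGT hη, Ioo_mem_nhdsGT one_pos] with h hhρ hhη hh1
  intro a haV ha w hw x hx
  by_contra! hcon
  have hh0 : 0 < h := hh1.1
  refine absurd (hmin (h, a, w, x) ⟨⟨haV, hx, ?_, hcon.le⟩, ⟨hh0.le, hh1.2.le⟩, by simpa using ha,
    by simpa using hw, ?_⟩) (not_le.2 hhη.2)
  · have := h₁disc a haV (ha.trans hrε.le) x
    have h2 := hx x₁
    have : 0 ≤ h * ⟪x - x₁, e + δ • w⟫ := by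
      rw [← inner_smul_right]
      rw [inner_add_right, ← neg_sub x x₁, inner_neg_left, inner_neg_left] at h2
      linarith
    exact nonneg_of_mul_nonneg_right this hh0
  · have hpb : p₀ + a + h • (e + δ • w) ∈ Metric.closedBall p₀ ρ := by
      rw [mem_closedBall_iff_norm, add_assoc, add_sub_cancel_left]
      calc ‖a + h • (e + δ • w)‖ ≤ ‖a‖ + h * (‖e‖ + δ * ‖w‖) := by
            refine (norm_add_le _ _).trans ?_
            rw [norm_smul, Real.norm_of_nonneg hh0.le]
            gcongr
            refine (norm_add_le _ _).trans ?_
            rw [norm_smul, Real.norm_of_nonneg hδ.le]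
        _ ≤ r + h * (‖e‖ + δ * 1) := by gcongr
        _ ≤ ρ := by rw [mul_one]; exact hhρ.le
    simpa using hM _ hpb x hx

lemma mem_image_anisoScale (V : Submodule ℝ E) [V.HasOrthogonalProjection] {s t : ℝ} (hs : 0 < s)
    (ht : 0 < t) {y : E} (h1 : ‖V.starProjection y‖ ≤ s) (h2 : ‖y - V.starProjection y‖ ≤ t) :
    y ∈ anisoScale V s t '' Metric.closedBall 0 2 := by
  refine ⟨s⁻¹ • V.starProjection y + t⁻¹ • (y - V.starProjection y), ?_, ?_⟩
  · rw [mem_closedBall_zero_iff]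
    refine (norm_add_le _ _).trans ?_
    rw [norm_smul, norm_smul, norm_inv, norm_inv, Real.norm_of_nonneg hs.le,
      Real.norm_of_nonneg ht.le]
    have := (inv_mul_le_one₀ hs).2 h1
    have := (inv_mul_le_one₀ ht).2 h2
    linarith
  · have h3 : V.starProjection (V.starProjection y) = V.starProjection y :=
      Submodule.starProjection_eq_self_iff.2 (Submodule.starProjection_apply_mem V y)
    rw [anisoScale_apply]
    simp only [map_add, map_smul, map_sub, h3, sub_self, smul_zero, add_zero, add_sub_cancel_left,
      smul_smul, mul_inv_cancel₀ hs.ne', mul_inv_cancel₀ ht.ne', one_smul]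
    abel

lemma norm_starProjection_le_of_inner_le (V : Submodule ℝ E) [V.HasOrthogonalProjection] {y : E}
    {r c : ℝ} (hr : 0 < r) (hc : 0 ≤ c) (h : ∀ b ∈ V, ‖b‖ ≤ r → ⟪y, b⟫ ≤ c) :
    ‖V.starProjection y‖ ≤ c / r := by
  rw [le_div_iff₀ hr]
  rcases eq_or_ne (V.starProjection y) 0 with h0 | h0
  · simpa [h0] using hc
  · have hn : 0 < ‖V.starProjection y‖ := norm_pos_iff.2 h0
    have h1 := h ((r / ‖V.starProjection y‖) • V.starProjection y)
      (V.smul_mem _ (Submodule.starProjection_apply_mem V y)) (by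
        rw [norm_smul, Real.norm_of_nonneg (by positivity)]; field_simp; rfl)
    have h2 : ⟪y, V.starProjection y⟫ = ‖V.starProjection y‖ ^ 2 := by
      have := Submodule.starProjection_inner_eq_zero (K := V) y _
        (Submodule.starProjection_apply_mem V y)
      rw [inner_sub_left, real_inner_self_eq_norm_sq] at this
      linarith
    rw [inner_smul_right, h2] at h1
    calc _ = r / ‖V.starProjection y‖ * ‖V.starProjection y‖ ^ 2 := by field_simp
      _ ≤ c := h1

open scoped Pointwise in
lemma exists_eventually_volume_anisoScale_le [FiniteDimensional ℝ E] [MeasurableSpace E]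
    [BorelSpace E] {u : E → ℝ} (hu : Continuous u) {V : Submodule ℝ E} {S : Set E} {Λ : ENNReal}
    (hvol : ∀ A : Set E, MeasurableSet A → volume (subdiffImage u A ∩ S) ≤ Λ * volume A)
    {x₀ p₀ : E} {M ρ r ε : ℝ} (hS : Metric.closedBall p₀ ρ ⊆ S)
    (hsub : ∀ p ∈ Metric.closedBall p₀ ρ, ∃ x, p ∈ subdiff u x)
    (hM : ∀ p ∈ Metric.closedBall p₀ ρ, ∀ x, p ∈ subdiff u x → ‖x‖ ≤ M)
    (hdisc : ∀ a ∈ V, ‖a‖ ≤ ε → p₀ + a ∈ subdiff u x₀) (hr : 0 < r) (hrε : 2 * r < ε)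
    (hrρ : 2 * r < ρ) :
    ∃ C > 0, ∀ δ ∈ Set.Ioc (0 : ℝ) 1, ∀ᶠ h in nhdsWithin (0 : ℝ) (Set.Ioi 0),
      volume (anisoScale V r (h * δ) '' Metric.closedBall 0 1) ≤
        Λ * volume (anisoScale V (C * (δ * h)) (3 * δ) '' Metric.closedBall 0 2) := by
  have hε : 0 < ε := by linarith
  obtain ⟨x₁, h₁, hfar⟩ := exists_farthest_of_mem_subdiff hu
    (hM p₀ (Metric.mem_closedBall_self (by linarith)))
    (by simpa using hdisc 0 V.zero_mem (by simpa using hε.le))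
  have h₁disc : ∀ b ∈ V, ‖b‖ ≤ ε → p₀ + b ∈ subdiff u x₁ :=
    (mem_orthogonal_and_add_mem_subdiff hdisc V.zero_mem (by simpa using hε) (by simpa using h₁)).2
  refine ⟨3 * (‖x₁ - x₀‖ + 1) / r, by positivity, fun δ hδ => ?_⟩
  have hδ0 : 0 < δ := hδ.1
  have hcont : Continuous fun h : ℝ => 2 * r + h * (‖x₁ - x₀‖ + δ) := by fun_prop
  have hev : ∀ᶠ h in nhdsWithin (0 : ℝ) (Set.Ioi 0), 2 * r + h * (‖x₁ - x₀‖ + δ) < ρ :=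
    nhdsWithin_le_nhds (hcont.continuousAt.eventually_lt continuousAt_const (by simpa using hrρ))
  filter_upwards [hev, self_mem_nhdsWithin, eventually_norm_sub_le_of_mem_subdiff hu hM hdisc
    (by positivity) hrε hrρ h₁ hfar hδ0] with h hhρ hh0 hclose
  replace hh0 : 0 < h := hh0
  set e := x₁ - x₀ with he
  have hdnorm : ∀ w : E, ‖w‖ ≤ 1 → ‖e + δ • w‖ ≤ ‖e‖ + δ := fun w hw => by
    refine (norm_add_le _ _).trans ?_
    rw [norm_smul, Real.norm_of_nonneg hδ0.le]
    gcongr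
    exact mul_le_of_le_one_right hδ0.le hw
  have hball : ∀ a : E, ‖a‖ ≤ 2 * r → ∀ w : E, ‖w‖ ≤ 1 →
      p₀ + a + h • (e + δ • w) ∈ Metric.closedBall p₀ ρ := by
    intro a ha w hw
    rw [mem_closedBall_iff_norm, add_assoc, add_sub_cancel_left]
    refine (norm_add_le _ _).trans ?_
    rw [norm_smul, Real.norm_of_nonneg hh0.le]
    have := mul_le_mul_of_nonneg_left (hdnorm w hw) hh0.le
    linarith
  set L := anisoScale V (3 * (‖e‖ + 1) / r * (δ * h)) (3 * δ) with hL
  have hmeas : MeasurableSet (x₁ +ᵥ (L '' Metric.closedBall 0 2)) :=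
    (((isCompact_closedBall (0 : E) 2).image L.continuous_of_finiteDimensional).vadd
      x₁).isClosed.measurableSet
  rw [← measure_vadd volume (p₀ + h • e), ← measure_vadd volume x₁ (L '' _)]
  refine (measure_mono ?_).trans (hvol _ hmeas)
  rintro _ ⟨_, ⟨z, hz, rfl⟩, rfl⟩
  rw [mem_closedBall_zero_iff] at hz
  set a := r • V.starProjection z with ha
  set w := z - V.starProjection z with hw
  have haV : a ∈ V := V.smul_mem _ (Submodule.starProjection_apply_mem V z)
  have hPz : ‖V.starProjection z‖ ≤ 1 := (V.norm_starProjection_apply_le z).trans hz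
  have har : ‖a‖ ≤ r := by
    rw [ha, norm_smul, Real.norm_of_nonneg hr.le]
    exact mul_le_of_le_one_right hr.le hPz
  have hw1 : ‖w‖ ≤ 1 := by
    have : w = Vᗮ.starProjection z := by
      rw [hw, Submodule.starProjection_orthogonal_val]
    rw [this]
    exact (Vᗮ.norm_starProjection_apply_le z).trans hz
  have hp : (p₀ + h • e) +ᵥ anisoScale V r (h * δ) z = p₀ + a + h • (e + δ • w) := by
    rw [anisoScale_apply, vadd_eq_add, smul_add, smul_smul]
    abel
  simp only [hp]
  have hpball := hball a (by linarith) w hw1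
  refine ⟨?_, hS hpball⟩
  obtain ⟨x, hx⟩ := hsub _ hpball
  refine Set.mem_biUnion ?_ hx
  refine ⟨x - x₁, mem_image_anisoScale V (by positivity) (by positivity) ?_ ?_, by simp⟩
  · have := norm_starProjection_le_of_inner_le V (y := x - x₁) (c := h * (3 * δ * (‖e‖ + 1))) hr
      (by positivity) ?_
    · convert this using 1; ring
    · intro b hb hbr
      have hab : ‖a + b‖ ≤ 2 * r := (norm_add_le _ _).trans (by linarith)
      have hpb := hball (a + b) hab w hw1
      obtain ⟨y, hy⟩ := hsub _ hpb
      have hyc := hclose (a + b) (add_mem haV hb) hab w hw1 y hy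
      refine (inner_sub_le_of_mem_subdiff hx (by rwa [add_assoc p₀ a b])
        (by rw [add_assoc]; exact h₁disc _ (add_mem haV hb) (hab.trans hrε.le))).trans ?_
      rw [inner_smul_right]
      gcongr
      refine (real_inner_le_norm _ _).trans ?_
      gcongr
      exact (hdnorm w hw1).trans (by linarith [hδ.2])
  · have hxc := hclose a haV (by linarith) w hw1 x hx
    have : x - x₁ - V.starProjection (x - x₁) = Vᗮ.starProjection (x - x₁) := by
      rw [Submodule.starProjection_orthogonal_val]
    rw [this]
    exact (Vᗮ.norm_starProjection_apply_le _).trans hxc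

lemma finrank_lt_of_eventually_volume_anisoScale_le [FiniteDimensional ℝ E] [Nontrivial E]
    [MeasurableSpace E] [BorelSpace E] {V : Submodule ℝ E} {Λ : NNReal} {r C : ℝ} (hr : 0 < r)
    (hC : 0 < C)
    (hev : ∀ δ ∈ Set.Ioc (0 : ℝ) 1, ∀ᶠ h in nhdsWithin (0 : ℝ) (Set.Ioi 0),
      volume (anisoScale V r (h * δ) '' Metric.closedBall 0 1) ≤
        Λ * volume (anisoScale V (C * (δ * h)) (3 * δ) '' Metric.closedBall 0 2)) :
    Module.finrank ℝ V < Module.finrank ℝ Vᗮ := by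
  by_contra! hle
  set k := Module.finrank ℝ V with hk
  set m := Module.finrank ℝ Vᗮ with hm
  have hk0 : k ≠ 0 := by
    have h1 : k + m = Module.finrank ℝ E := V.finrank_add_finrank_orthogonal
    have h2 : 0 < Module.finrank ℝ E := Module.finrank_pos
    omega
  set β₁ := volume.real (Metric.closedBall (0 : E) 1) with hβ₁
  set β₂ := volume.real (Metric.closedBall (0 : E) 2) with hβ₂
  have hβ₁pos : 0 < β₁ := ENNReal.toReal_pos
    (Metric.measure_closedBall_pos volume _ one_pos).ne' measure_closedBall_lt_top.ne
  have hcont : Continuous fun δ : ℝ => Λ * C ^ k * 3 ^ m * β₂ * δ ^ k := by fun_prop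
  have hδev : ∀ᶠ δ in nhdsWithin (0 : ℝ) (Set.Ioi 0),
      Λ * C ^ k * 3 ^ m * β₂ * δ ^ k < r ^ k * β₁ :=
    nhdsWithin_le_nhds (hcont.continuousAt.eventually_lt continuousAt_const (by
      simp only [zero_pow hk0, mul_zero]; positivity))
  obtain ⟨δ, hδ, hδ0, hδ1⟩ := (hδev.and (Ioo_mem_nhdsGT one_pos)).exists
  obtain ⟨h, hvol, hh0, hh1⟩ := ((hev δ ⟨hδ0, hδ1.le⟩).and (Ioo_mem_nhdsGT one_pos)).exists
  rw [Measure.addHaar_image_linearMap, Measure.addHaar_image_linearMap, det_anisoScale,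
    det_anisoScale, abs_of_nonneg (by positivity), abs_of_nonneg (by positivity)] at hvol
  have hreal : (r ^ k * (h * δ) ^ m) * β₁ ≤ Λ * (((C * (δ * h)) ^ k * (3 * δ) ^ m) * β₂) := by
    have := ENNReal.toReal_mono (ENNReal.mul_ne_top ENNReal.coe_ne_top
      (ENNReal.mul_ne_top ENNReal.ofReal_ne_top measure_closedBall_lt_top.ne)) hvol
    rw [ENNReal.toReal_mul, ENNReal.toReal_mul, ENNReal.toReal_mul,
      ENNReal.toReal_ofReal (by positivity), ENNReal.toReal_ofReal (by positivity)] at this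
    exact this
  have hhk : h ^ k ≤ h ^ m := pow_le_pow_of_le_one hh0.le hh1.le hle
  have h1 : (h ^ m * δ ^ m) * (r ^ k * β₁) ≤ (h ^ m * δ ^ m) * (Λ * C ^ k * 3 ^ m * β₂ * δ ^ k) :=
    calc _ = (r ^ k * (h * δ) ^ m) * β₁ := by ring
      _ ≤ Λ * (((C * (δ * h)) ^ k * (3 * δ) ^ m) * β₂) := hreal
      _ = (h ^ k * δ ^ m) * (Λ * C ^ k * 3 ^ m * β₂ * δ ^ k) := by ring
      _ ≤ _ := by gcongr
  exact (le_of_mul_le_mul_left h1 (by positivity)).not_gt hδ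

end

lemma msupport_subset_closure_range_subdiff {E : Type*} [NormedAddCommGroup E]
    [InnerProductSpace ℝ E] [MeasurableSpace E] [BorelSpace E] {μ : Measure E} {u : E → ℝ}
    {T : E → E} (hT : Measurable T) (hTsub : ∀ᵐ x ∂μ, T x ∈ subdiff u x) :
    msupport (μ.map T) ⊆ closure {p | ∃ x, p ∈ subdiff u x} := by
  intro p hp
  rw [mem_closure_iff]
  intro U hU hpU
  have h1 := hp U (hU.mem_nhds hpU)
  rw [Measure.map_apply hT hU.measurableSet] at h1
  obtain ⟨x, hxU, hx⟩ := ((frequently_ae_mem_iff.2 h1).and_eventually hTsub).exists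
  exact ⟨T x, hxU, x, hx⟩

/-- **Caffarelli's dimensional bound on the degeneracy of optimal maps**
(Euclidean quadratic cost). Let `μ, ν` be probability measures on `ℝⁿ` with bounded
supports, `μ` absolutely continuous with respect to Lebesgue measure, and let
`u` be a convex Brenier potential transporting `μ` to `ν` (i.e. there is a Borel map
`T` with `T x ∈ ∂u(x)` for `μ`-a.e. `x` and `T₊μ = ν`), satisfying
`Leb(∂u(E) ∩ spt ν) ≤ Λ · Leb(E)` for all Borel `E`. Then at every point `x` where
`∂u(x)` meets the interior of `spt ν`, the affine dimension of `∂u(x)` is strictly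
less than `n/2`. -/
theorem affdim_subdiff_lt_half_dim
    (n : ℕ) (hn : 1 ≤ n)
    (μ ν : Measure (EuclideanSpace ℝ (Fin n)))
    [IsProbabilityMeasure μ] [IsProbabilityMeasure ν]
    (hμbdd : Bornology.IsBounded (msupport μ))
    (hνbdd : Bornology.IsBounded (msupport ν))
    (hac : μ ≪ volume)
    (u : EuclideanSpace ℝ (Fin n) → ℝ) (hu : ConvexOn ℝ Set.univ u)
    (T : EuclideanSpace ℝ (Fin n) → EuclideanSpace ℝ (Fin n))
    (hT : Measurable T)
    (hTsub : ∀ᵐ x ∂μ, T x ∈ subdiff u x)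
    (hpush : Measure.map T μ = ν)
    (Λ : NNReal) (hΛ : 0 < Λ)
    (hvol : ∀ E : Set (EuclideanSpace ℝ (Fin n)), MeasurableSet E →
      volume (subdiffImage u E ∩ msupport ν) ≤ (Λ : ENNReal) * volume E) :
    ∀ x : EuclideanSpace ℝ (Fin n),
      (subdiff u x ∩ interior (msupport ν)).Nonempty →
      2 * Module.finrank ℝ (vectorSpan ℝ (subdiff u x)) < n := by
  rintro x₀ hne
  have hcont : Continuous u := continuousOn_univ.1 (by simpa using hu.continuousOn_interior)
  set V := vectorSpan ℝ (subdiff u x₀) with hV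
  obtain ⟨p₀, hp₀, ε, hε, hdisc⟩ :=
    (convex_subdiff u x₀).exists_forall_add_mem_of_mem_open isOpen_interior hne
  obtain ⟨ρ₁, hρ₁, C, hC⟩ := subdiff_conjugate_bound_of_mem_interior_closure (u := u)
    (fun p hp => hp) (interior_mono
      (by rw [← hpush]; exact msupport_subset_closure_range_subdiff hT hTsub) hp₀)
  obtain ⟨ρ₂, hρ₂, hball⟩ :=
    Metric.nhds_basis_closedBall.mem_iff.1 (mem_interior_iff_mem_nhds.1 hp₀)
  set ρ := min (ρ₁ / 2) ρ₂ with hρ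
  have hρpos : 0 < ρ := lt_min (by positivity) hρ₂
  have hsubball : Metric.closedBall p₀ ρ ⊆ Metric.closedBall p₀ (ρ₁ / 2) :=
    Metric.closedBall_subset_closedBall (min_le_left _ _)
  have hm : 0 < min ε ρ := lt_min hε hρpos
  obtain ⟨K, hK, hev⟩ := exists_eventually_volume_anisoScale_le hcont (r := min ε ρ / 3) hvol
    ((Metric.closedBall_subset_closedBall (min_le_right _ _)).trans hball)
    (fun p hp => exists_mem_subdiff_of_conjugate_bound hcont hρ₁ hC (hsubball hp))
    (fun p hp x hx => norm_le_of_conjugate_bound hρ₁ hC (hsubball hp) hx) hdisc (by positivity)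
    (by linarith [min_le_left ε ρ]) (by linarith [min_le_right ε ρ])
  have : Nontrivial (EuclideanSpace ℝ (Fin n)) :=
    Module.nontrivial_of_finrank_pos (R := ℝ) (by rw [finrank_euclideanSpace_fin]; omega)
  have hlt : Module.finrank ℝ V < Module.finrank ℝ Vᗮ :=
    finrank_lt_of_eventually_volume_anisoScale_le (by positivity) hK hev
  have hsum := V.finrank_add_finrank_orthogonal
  rw [finrank_euclideanSpace_fin] at hsum
  omega
end

section
/- Let Ω, Ω̄ ⊆ ℝⁿ be bounded open sets and c : ℝⁿ × ℝⁿ → ℝ a cost function satisfying (A0)–(A2) for Ω, Ω̄, such that Ω and Ω̄ are c-convex with respect to each other, and such that c satisfies Loeper's maximum principle. Let u : Ω → ℝ be a c-convex function. Then for every x̄₀ ∈ Ω̄ and λ₀ ∈ ℝ, the c-sublevel set {x ∈ Ω : u(x) ≤ −c(x, x̄₀) + λ₀} is c-convex with respect to x̄₀; that is, the set {−D_x̄ c(x, x̄₀) : x ∈ Ω, u(x) ≤ −c(x, x̄₀) + λ₀} ⊆ ℝⁿ is convex. -/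
open Set

/-- `D_x c(x,y)`: the Fréchet derivative of `c` in its first variable, identified with a
vector in `ℝⁿ` via the inner product (i.e. the gradient in the first variable). -/
noncomputable def Dx {n : ℕ} (c : EuclideanSpace ℝ (Fin n) → EuclideanSpace ℝ (Fin n) → ℝ)
    (x y : EuclideanSpace ℝ (Fin n)) : EuclideanSpace ℝ (Fin n) :=
  gradient (fun z => c z y) x

/-- `D_x̄ c(x,y)`: the Fréchet derivative of `c` in its second variable, identified with a
vector in `ℝⁿ` via the inner product (i.e. the gradient in the second variable). -/
noncomputable def Dy {n : ℕ} (c : EuclideanSpace ℝ (Fin n) → EuclideanSpace ℝ (Fin n) → ℝ)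
    (x y : EuclideanSpace ℝ (Fin n)) : EuclideanSpace ℝ (Fin n) :=
  gradient (fun z => c x z) y

/-- The `c`-subdifferential of `u` at `x₀` (relative to domains `Ω`, `Ω̄`):
`∂_c u(x₀) = {x̄ ∈ Ω̄ : u(x) ≥ u(x₀) − c(x,x̄) + c(x₀,x̄) for all x ∈ Ω}`. -/
def csub {n : ℕ} (Ω Ωb : Set (EuclideanSpace ℝ (Fin n)))
    (c : EuclideanSpace ℝ (Fin n) → EuclideanSpace ℝ (Fin n) → ℝ)
    (u : EuclideanSpace ℝ (Fin n) → ℝ) (x₀ : EuclideanSpace ℝ (Fin n)) :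
    Set (EuclideanSpace ℝ (Fin n)) :=
  {y ∈ Ωb | ∀ x ∈ Ω, u x₀ - c x y + c x₀ y ≤ u x}

open Filter Topology

section MixedDerivatives

variable {n : ℕ} {c : EuclideanSpace ℝ (Fin n) → EuclideanSpace ℝ (Fin n) → ℝ}
  {x y : EuclideanSpace ℝ (Fin n)}

/-- The Riesz isomorphism from the dual of `ℝⁿ` to `ℝⁿ`, as a real continuous linear map. -/
noncomputable def rieszCLM (n : ℕ) :
    (EuclideanSpace ℝ (Fin n) →L[ℝ] ℝ) →L[ℝ] EuclideanSpace ℝ (Fin n) where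
  toFun := (InnerProductSpace.toDual ℝ (EuclideanSpace ℝ (Fin n))).symm
  map_add' := map_add _
  map_smul' r f := by simp
  cont := (InnerProductSpace.toDual ℝ (EuclideanSpace ℝ (Fin n))).symm.continuous

lemma inner_rieszCLM (f : EuclideanSpace ℝ (Fin n) →L[ℝ] ℝ) (a : EuclideanSpace ℝ (Fin n)) :
    inner ℝ (rieszCLM n f) a = f a :=
  InnerProductSpace.toDual_symm_apply

lemma Dx_eq_rieszCLM
    (h : DifferentiableAt ℝ (fun q : EuclideanSpace ℝ (Fin n) × EuclideanSpace ℝ (Fin n) =>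
      c q.1 q.2) (x, y)) :
    Dx c x y = rieszCLM n ((fderiv ℝ (fun q : EuclideanSpace ℝ (Fin n) ×
      EuclideanSpace ℝ (Fin n) => c q.1 q.2) (x, y)).comp (ContinuousLinearMap.inl ℝ _ _)) := by
  have := HasFDerivAt.comp x (f := fun z => (z, y)) h.hasFDerivAt (hasFDerivAt_prodMk_left x y)
  exact congrArg (rieszCLM n) this.fderiv

lemma Dy_eq_rieszCLM
    (h : DifferentiableAt ℝ (fun q : EuclideanSpace ℝ (Fin n) × EuclideanSpace ℝ (Fin n) =>
      c q.1 q.2) (x, y)) :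
    Dy c x y = rieszCLM n ((fderiv ℝ (fun q : EuclideanSpace ℝ (Fin n) ×
      EuclideanSpace ℝ (Fin n) => c q.1 q.2) (x, y)).comp (ContinuousLinearMap.inr ℝ _ _)) := by
  have := HasFDerivAt.comp y (f := fun z => (x, z)) h.hasFDerivAt (hasFDerivAt_prodMk_right x y)
  exact congrArg (rieszCLM n) this.fderiv

lemma eventually_differentiableAt
    (h : ContDiffAt ℝ 2 (fun q : EuclideanSpace ℝ (Fin n) × EuclideanSpace ℝ (Fin n) =>
      c q.1 q.2) (x, y)) :
    ∀ᶠ p in 𝓝 (x, y), DifferentiableAt ℝ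
      (fun q : EuclideanSpace ℝ (Fin n) × EuclideanSpace ℝ (Fin n) => c q.1 q.2) p :=
  (h.eventually (by simp)).mono fun _ hp => hp.differentiableAt (by simp)

lemma contDiffAt_Dx
    (h : ContDiffAt ℝ 2 (fun q : EuclideanSpace ℝ (Fin n) × EuclideanSpace ℝ (Fin n) =>
      c q.1 q.2) (x, y)) :
    ContDiffAt ℝ 1 (fun q : EuclideanSpace ℝ (Fin n) × EuclideanSpace ℝ (Fin n) =>
      Dx c q.1 q.2) (x, y) := by
  refine ContDiffAt.congr_of_eventuallyEq ?_
    ((eventually_differentiableAt h).mono fun p hp => Dx_eq_rieszCLM hp)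
  exact (rieszCLM n).contDiff.contDiffAt.comp _
    ((h.fderiv_right (m := 1) (by norm_num)).clm_comp contDiffAt_const)

lemma contDiffAt_Dy
    (h : ContDiffAt ℝ 2 (fun q : EuclideanSpace ℝ (Fin n) × EuclideanSpace ℝ (Fin n) =>
      c q.1 q.2) (x, y)) :
    ContDiffAt ℝ 1 (fun q : EuclideanSpace ℝ (Fin n) × EuclideanSpace ℝ (Fin n) =>
      Dy c q.1 q.2) (x, y) := by
  refine ContDiffAt.congr_of_eventuallyEq ?_
    ((eventually_differentiableAt h).mono fun p hp => Dy_eq_rieszCLM hp)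
  exact (rieszCLM n).contDiff.contDiffAt.comp _
    ((h.fderiv_right (m := 1) (by norm_num)).clm_comp contDiffAt_const)

/-- Symmetry of the mixed second derivatives of `c`. -/
lemma inner_fderiv_Dy_eq_inner_fderiv_Dx
    (h : ContDiffAt ℝ 2 (fun q : EuclideanSpace ℝ (Fin n) × EuclideanSpace ℝ (Fin n) =>
      c q.1 q.2) (x, y)) (a b : EuclideanSpace ℝ (Fin n)) :
    inner ℝ (fderiv ℝ (fun x' => Dy c x' y) x a) b =
      inner ℝ (fderiv ℝ (fun y' => Dx c x y') y b) a := by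
  set C := fun q : EuclideanSpace ℝ (Fin n) × EuclideanSpace ℝ (Fin n) => c q.1 q.2
  have hd : HasFDerivAt (fderiv ℝ C) (fderiv ℝ (fderiv ℝ C) (x, y)) (x, y) :=
    ((h.fderiv_right (m := 1) (by norm_num)).differentiableAt (by simp)).hasFDerivAt
  have hsymm : IsSymmSndFDerivAt ℝ C (x, y) := h.isSymmSndFDerivAt (by simp)
  have h1 := HasFDerivAt.comp x (f := fun z => (z, y)) hd (hasFDerivAt_prodMk_left x y)
  have h2 := HasFDerivAt.comp y (f := fun z => (x, z)) hd (hasFDerivAt_prodMk_right x y)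
  have e1 := (rieszCLM n).hasFDerivAt.comp x
    (h1.clm_comp (hasFDerivAt_const (ContinuousLinearMap.inr ℝ _ _) x))
  have e2 := (rieszCLM n).hasFDerivAt.comp y
    (h2.clm_comp (hasFDerivAt_const (ContinuousLinearMap.inl ℝ _ _) y))
  have ev := eventually_differentiableAt h
  have c1 : ContinuousAt (fun z => (z, y)) x := by fun_prop
  have c2 : ContinuousAt (fun z => (x, z)) y := by fun_prop
  have f1 := e1.congr_of_eventuallyEq
    ((c1.eventually ev).mono fun z (hz : DifferentiableAt ℝ C (z, y)) => Dy_eq_rieszCLM hz)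
  have f2 := e2.congr_of_eventuallyEq
    ((c2.eventually ev).mono fun z (hz : DifferentiableAt ℝ C (x, z)) => Dx_eq_rieszCLM hz)
  rw [f1.fderiv, f2.fderiv]
  simp only [ContinuousLinearMap.comp_apply, inner_rieszCLM]
  simpa using hsymm (a, 0) (0, b)

end MixedDerivatives

section Halfspace

variable {n : ℕ} {Ω Ωb : Set (EuclideanSpace ℝ (Fin n))}
  {c : EuclideanSpace ℝ (Fin n) → EuclideanSpace ℝ (Fin n) → ℝ}

/-- Inverting `y ↦ Dx c x₀ y` near `y₀` along a line gives a local `c`-segment issuing from `y₀`. -/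
lemma exists_local_csegment {x₀ y₀ : EuclideanSpace ℝ (Fin n)}
    (hc : ContDiffAt ℝ 2 (fun q : EuclideanSpace ℝ (Fin n) × EuclideanSpace ℝ (Fin n) =>
      c q.1 q.2) (x₀, y₀))
    (hbij : Function.Bijective (fderiv ℝ (fun y' => Dx c x₀ y') y₀))
    (q : EuclideanSpace ℝ (Fin n)) :
    ∃ (Y : ℝ → EuclideanSpace ℝ (Fin n)) (w : EuclideanSpace ℝ (Fin n)),
      Y 0 = y₀ ∧ HasDerivAt Y w 0 ∧ (∀ᶠ t in 𝓝 0, Dx c x₀ (Y t) = Dx c x₀ y₀ + t • q) ∧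
        fderiv ℝ (fun y' => Dx c x₀ y') y₀ w = q := by
  have hcd : ContDiffAt ℝ 1 (fun y' => Dx c x₀ y') y₀ :=
    ContDiffAt.comp y₀ (f := fun z => (x₀, z)) (contDiffAt_Dx hc) (by fun_prop)
  let e := ContinuousLinearEquiv.ofBijective (fderiv ℝ (fun y' => Dx c x₀ y') y₀)
    (LinearMap.ker_eq_bot.2 hbij.1) (LinearMap.range_eq_top.2 hbij.2)
  have hs : HasStrictFDerivAt (fun y' => Dx c x₀ y')
      (e : EuclideanSpace ℝ (Fin n) →L[ℝ] EuclideanSpace ℝ (Fin n)) y₀ :=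
    hcd.hasStrictFDerivAt (by simp)
  have hline : HasDerivAt (fun t : ℝ => Dx c x₀ y₀ + t • q) q 0 := by
    simpa using ((hasDerivAt_id (0 : ℝ)).smul_const q).const_add (Dx c x₀ y₀)
  have h0 : Dx c x₀ y₀ + (0 : ℝ) • q = Dx c x₀ y₀ := by simp
  refine ⟨fun t => hs.localInverse _ _ _ (Dx c x₀ y₀ + t • q), e.symm q, ?_, ?_, ?_, ?_⟩
  · simpa only [h0] using hs.localInverse_apply_image
  · have := hs.to_localInverse.hasFDerivAt
    exact HasFDerivAt.comp_hasDerivAt (0 : ℝ) (f := fun t : ℝ => Dx c x₀ y₀ + t • q)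
      (by simpa only [h0] using this) hline
  · have ht : Tendsto (fun t : ℝ => Dx c x₀ y₀ + t • q) (𝓝 0) (𝓝 (Dx c x₀ y₀)) := by
      simpa only [h0] using hline.continuousAt.tendsto
    exact ht.eventually hs.eventually_right_inverse
  · exact e.apply_symm_apply q

/-- Under Loeper's maximum principle, the sublevel set `{F ≤ F x₀}` of
`F x = -c x y + c x y₀` lies, in the coordinates `x ↦ -Dy c x y₀`, in a half-space whose
boundary contains the image of `x₀`. -/
lemma exists_supporting_halfspace {x₀ y₀ y : EuclideanSpace ℝ (Fin n)}
    (hΩbo : IsOpen Ωb)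
    (hc : ∀ x ∈ Ω, ∀ y ∈ Ωb, ContDiffAt ℝ 2
      (fun q : EuclideanSpace ℝ (Fin n) × EuclideanSpace ℝ (Fin n) => c q.1 q.2) (x, y))
    (hbij : Function.Bijective (fderiv ℝ (fun y' => Dx c x₀ y') y₀))
    (hinj : Set.InjOn (fun y => -Dx c x₀ y) Ωb)
    (hLoeper : ∀ x ∈ Ω, ∀ y₀ ∈ Ωb, ∀ y₁ ∈ Ωb, ∀ t ∈ Set.Icc (0:ℝ) 1,
      ∀ yt ∈ Ωb,
        -Dx c x₀ yt = (1 - t) • (-Dx c x₀ y₀) + t • (-Dx c x₀ y₁) →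
        -c x yt + c x₀ yt ≤ max (-c x y₀ + c x₀ y₀) (-c x y₁ + c x₀ y₁))
    (hx₀ : x₀ ∈ Ω) (hy₀ : y₀ ∈ Ωb) (hy : y ∈ Ωb) (hne : y ≠ y₀) :
    ∃ w : EuclideanSpace ℝ (Fin n), w ≠ 0 ∧ ∀ x ∈ Ω,
      -c x y + c x y₀ ≤ -c x₀ y + c x₀ y₀ →
        inner ℝ (-Dy c x y₀) w ≤ inner ℝ (-Dy c x₀ y₀) w := by
  obtain ⟨Y, w, hY0, hYd, hYev, hw⟩ :=
    exists_local_csegment (hc x₀ hx₀ y₀ hy₀) hbij (Dx c x₀ y - Dx c x₀ y₀)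
  refine ⟨w, ?_, fun x hx hF => ?_⟩
  · rintro rfl
    rw [map_zero, eq_comm, sub_eq_zero] at hw
    exact hne (hinj hy hy₀ (congrArg Neg.neg hw))
  have hderiv : ∀ z ∈ Ω, HasDerivAt (fun t => c z (Y t)) (inner ℝ (Dy c z y₀) w) 0 := by
    intro z hz
    have hd : DifferentiableAt ℝ (fun y' => c z y') y₀ :=
      DifferentiableAt.comp y₀ (f := fun y' => (z, y'))
        ((hc z hz y₀ hy₀).differentiableAt (by simp)) (by fun_prop)
    have hg : HasFDerivAt (fun y' => c z y') (fderiv ℝ (fun y' => c z y') y₀) (Y 0) := by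
      rw [hY0]; exact hd.hasFDerivAt
    have hin : inner ℝ (Dy c z y₀) w = fderiv ℝ (fun y' => c z y') y₀ w :=
      InnerProductSpace.toDual_symm_apply
    rw [hin]
    exact hg.comp_hasDerivAt 0 hYd
  have hG := (hderiv x hx).neg.add (hderiv x₀ hx₀)
  have hmem : ∀ᶠ t in 𝓝 (0 : ℝ), Y t ∈ Ωb :=
    hYd.continuousAt.eventually (hΩbo.mem_nhds (hY0.symm ▸ hy₀))
  have hle : ∀ᶠ t in 𝓝[>] (0 : ℝ), -c x (Y t) + c x₀ (Y t) ≤ -c x y₀ + c x₀ y₀ := by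
    filter_upwards [nhdsWithin_le_nhds hmem, nhdsWithin_le_nhds hYev,
      Ioc_mem_nhdsGT (zero_lt_one' ℝ)] with t htm hte ht
    refine (hLoeper x hx y₀ hy₀ y hy t ⟨ht.1.le, ht.2⟩ (Y t) htm ?_).trans
      (max_le le_rfl (by linarith))
    rw [hte]
    module
  have hslope := (hasDerivWithinAt_iff_tendsto_slope' (by simp)).1
    (hG.hasDerivWithinAt (s := Set.Ioi 0))
  have hnonpos := le_of_tendsto hslope (b := 0) <| by
    filter_upwards [hle, self_mem_nhdsWithin] with t ht (ht0 : 0 < t)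
    rw [slope_def_field]
    refine div_nonpos_of_nonpos_of_nonneg ?_ (by linarith)
    simpa [hY0] using ht
  rw [inner_neg_left, inner_neg_left]
  linarith

/-- The half-space inequality is strict at points of the strict sublevel set. -/
lemma inner_Dy_lt_of_halfspace {f : EuclideanSpace ℝ (Fin n) → ℝ}
    {x₁ y₀ w : EuclideanSpace ℝ (Fin n)} {r M : ℝ} (hΩo : IsOpen Ω)
    (hc : ContDiffAt ℝ 2
      (fun q : EuclideanSpace ℝ (Fin n) × EuclideanSpace ℝ (Fin n) => c q.1 q.2) (x₁, y₀))
    (hinj : Function.Injective (fderiv ℝ (fun y' => Dx c x₁ y') y₀))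
    (hf : ContinuousAt f x₁) (hw : w ≠ 0)
    (hhalf : ∀ x ∈ Ω, f x ≤ M → inner ℝ (-Dy c x y₀) w ≤ r)
    (hx₁ : x₁ ∈ Ω) (hlt : f x₁ < M) :
    inner ℝ (-Dy c x₁ y₀) w < r := by
  refine lt_of_le_of_ne (hhalf x₁ hx₁ hlt.le) fun heq => hw ?_
  have hmax : IsLocalMax (fun x => inner ℝ (-Dy c x y₀) w) x₁ := by
    filter_upwards [hΩo.mem_nhds hx₁, hf.eventually (gt_mem_nhds hlt)] with x hx hxM
    exact (hhalf x hx hxM.le).trans_eq heq.symm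
  have hd : DifferentiableAt ℝ (fun x' => Dy c x' y₀) x₁ :=
    DifferentiableAt.comp x₁ (f := fun z => (z, y₀))
      ((contDiffAt_Dy hc).differentiableAt (by simp)) (by fun_prop)
  have hzero := hmax.hasFDerivAt_eq_zero
    (hd.hasFDerivAt.neg.inner ℝ (hasFDerivAt_const w x₁))
  refine hinj ?_
  rw [map_zero, ← inner_self_eq_zero (𝕜 := ℝ), ← inner_fderiv_Dy_eq_inner_fderiv_Dx hc]
  simpa using DFunLike.congr_fun hzero (fderiv ℝ (fun y' => Dx c x₁ y') y₀ w)

end Halfspace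

/-- Lemma 2.2 of the paper (for domains in `ℝⁿ`): under (A0)–(A2), mutual `c`-convexity of
the domains and Loeper's maximum principle, for a `c`-convex function `u` every
`c`-sublevel set `{x ∈ Ω : u(x) ≤ −c(x,x̄₀) + λ₀}` is `c`-convex with respect to `x̄₀`,
i.e. its image under `x ↦ −D_x̄ c(x,x̄₀)` is convex. -/
theorem csublevel_set_cconvex
    (n : ℕ) (Ω Ωb : Set (EuclideanSpace ℝ (Fin n)))
    (hΩo : IsOpen Ω) (hΩbd : Bornology.IsBounded Ω)
    (hΩbo : IsOpen Ωb) (hΩbbd : Bornology.IsBounded Ωb)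
    (c : EuclideanSpace ℝ (Fin n) → EuclideanSpace ℝ (Fin n) → ℝ)
    -- (A0): `c` is C⁴ on a neighborhood of the closure of `Ω × Ω̄`
    (hA0 : ∃ U : Set (EuclideanSpace ℝ (Fin n) × EuclideanSpace ℝ (Fin n)),
      IsOpen U ∧ closure (Ω ×ˢ Ωb) ⊆ U ∧
        ContDiffOn ℝ 4 (fun q : EuclideanSpace ℝ (Fin n) × EuclideanSpace ℝ (Fin n) =>
          c q.1 q.2) U)
    -- (A1), twist
    (hA1x : ∀ x ∈ Ω, Set.InjOn (fun y => -Dx c x y) Ωb)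
    (hA1y : ∀ y ∈ Ωb, Set.InjOn (fun x => -Dy c x y) Ω)
    -- (A2), nondegeneracy
    (hA2 : ∀ x ∈ Ω, ∀ y ∈ Ωb,
      Function.Bijective (fderiv ℝ (fun y' => Dx c x y') y))
    -- `Ω̄` is `c`-convex with respect to `Ω` and vice versa
    (hccΩb : ∀ x ∈ Ω, Convex ℝ ((fun y => -Dx c x y) '' Ωb))
    (hccΩ : ∀ y ∈ Ωb, Convex ℝ ((fun x => -Dy c x y) '' Ω))
    -- Loeper's maximum principle
    (hLoeper : ∀ x₀ ∈ Ω, ∀ x ∈ Ω, ∀ y₀ ∈ Ωb, ∀ y₁ ∈ Ωb, ∀ t ∈ Set.Icc (0:ℝ) 1,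
      ∀ yt ∈ Ωb,
        -Dx c x₀ yt = (1 - t) • (-Dx c x₀ y₀) + t • (-Dx c x₀ y₁) →
        -c x yt + c x₀ yt ≤ max (-c x y₀ + c x₀ y₀) (-c x y₁ + c x₀ y₁))
    (u : EuclideanSpace ℝ (Fin n) → ℝ)
    -- `u` is `c`-convex
    (hu : ∀ x₀ ∈ Ω, ∃ y₀ ∈ Ωb, ∃ l : ℝ,
      u x₀ = -c x₀ y₀ + l ∧ ∀ x ∈ Ω, -c x y₀ + l ≤ u x) :
    ∀ xb₀ ∈ Ωb, ∀ l₀ : ℝ,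
      Convex ℝ ((fun x => -Dy c x xb₀) '' {x ∈ Ω | u x ≤ -c x xb₀ + l₀}) := by
  intro y₀ hy₀ l₀
  have hc : ∀ x ∈ Ω, ∀ y ∈ Ωb, ContDiffAt ℝ 2
      (fun q : EuclideanSpace ℝ (Fin n) × EuclideanSpace ℝ (Fin n) => c q.1 q.2) (x, y) := by
    obtain ⟨U, hU, hsub, hcU⟩ := hA0
    intro x hx y hy
    exact (hcU.contDiffAt (hU.mem_nhds (hsub (subset_closure ⟨hx, hy⟩)))).of_le (by norm_num)
  rintro _ ⟨x₀, ⟨hx₀, hu₀⟩, rfl⟩ _ ⟨x₁, ⟨hx₁, hu₁⟩, rfl⟩ a b ha hb hab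
  obtain ⟨z, hz, hzeq⟩ := hccΩ y₀ hy₀ (mem_image_of_mem _ hx₀) (mem_image_of_mem _ hx₁) ha hb hab
  refine ⟨z, ⟨hz, ?_⟩, hzeq⟩
  obtain ⟨y, hy, l, huz, hl⟩ := hu z hz
  by_contra! hlt
  have hlt₀ : -c x₀ y + c x₀ y₀ < -c z y + c z y₀ := by linarith [hl x₀ hx₀]
  have hlt₁ : -c x₁ y + c x₁ y₀ < -c z y + c z y₀ := by linarith [hl x₁ hx₁]
  have hne : y ≠ y₀ := by
    rintro rfl
    linarith
  obtain ⟨w, hw, hhalf⟩ := exists_supporting_halfspace hΩbo hc (hA2 z hz y₀ hy₀) (hA1x z hz)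
    (hLoeper z hz) hz hy₀ hy hne
  have hcont : ∀ x ∈ Ω, ContinuousAt (fun x => -c x y + c x y₀) x := by
    intro x hx
    have hcy : ∀ y' ∈ Ωb, ContinuousAt (fun x => c x y') x := fun y' hy' =>
      ContinuousAt.comp (f := fun x => (x, y')) (hc x hx y' hy').continuousAt (by fun_prop)
    exact (hcy y hy).neg.add (hcy y₀ hy₀)
  have hs₀ := inner_Dy_lt_of_halfspace hΩo (hc x₀ hx₀ y₀ hy₀) (hA2 x₀ hx₀ y₀ hy₀).1
    (hcont x₀ hx₀) hw hhalf hx₀ hlt₀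
  have hs₁ := inner_Dy_lt_of_halfspace hΩo (hc x₁ hx₁ y₀ hy₀) (hA2 x₁ hx₁ y₀ hy₀).1
    (hcont x₁ hx₁) hw hhalf hx₁ hlt₁
  have hcomb := congrArg (fun v => inner ℝ v w) hzeq
  simp only [inner_add_left, real_inner_smul_left] at hcomb
  obtain rfl : a = 1 - b := by linarith
  have hupper := Convex.combo_le_max (inner ℝ (-Dy c x₀ y₀) w) (inner ℝ (-Dy c x₁ y₀) w) ha hb hab
  simp only [smul_eq_mul] at hupper
  exact absurd (hcomb.le.trans hupper) (not_le.2 (max_lt hs₀ hs₁))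
end

section
/- Let Ω, Ω̄ ⊆ ℝⁿ be bounded open sets and c : ℝⁿ × ℝⁿ → ℝ a cost function satisfying (A0)–(A2) for Ω, Ω̄, such that Ω is c-convex with respect to Ω̄, and such that c satisfies Loeper's maximum principle. Let u : Ω → ℝ be a c-convex function. Then for any x̄₀ ∈ Ω̄ and λ₀ ∈ ℝ, if the function x ↦ u(x) + c(x, x̄₀) − λ₀ has a local minimum at a point x₀ ∈ Ω, then x̄₀ ∈ ∂_c u(x₀). -/
open Set

section CostDerivatives

open Filter Topology

variable {n : ℕ} {c : EuclideanSpace ℝ (Fin n) → EuclideanSpace ℝ (Fin n) → ℝ}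
  {x y : EuclideanSpace ℝ (Fin n)}

lemma Dx_eq_toDual_symm_fderiv
    (h : DifferentiableAt ℝ (fun q : EuclideanSpace ℝ (Fin n) × EuclideanSpace ℝ (Fin n) =>
      c q.1 q.2) (x, y)) :
    Dx c x y = (InnerProductSpace.toDual ℝ (EuclideanSpace ℝ (Fin n))).symm
      ((fderiv ℝ (fun q : EuclideanSpace ℝ (Fin n) × EuclideanSpace ℝ (Fin n) =>
        c q.1 q.2) (x, y)).comp (ContinuousLinearMap.inl ℝ _ _)) := by
  have h1 : HasFDerivAt (fun z => c z y) _ x :=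
    HasFDerivAt.comp (f := fun z => (z, y)) x h.hasFDerivAt (hasFDerivAt_prodMk_left x y)
  rw [Dx, gradient, h1.fderiv]

lemma Dy_eq_toDual_symm_fderiv
    (h : DifferentiableAt ℝ (fun q : EuclideanSpace ℝ (Fin n) × EuclideanSpace ℝ (Fin n) =>
      c q.1 q.2) (x, y)) :
    Dy c x y = (InnerProductSpace.toDual ℝ (EuclideanSpace ℝ (Fin n))).symm
      ((fderiv ℝ (fun q : EuclideanSpace ℝ (Fin n) × EuclideanSpace ℝ (Fin n) =>
        c q.1 q.2) (x, y)).comp (ContinuousLinearMap.inr ℝ _ _)) := by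
  have h1 : HasFDerivAt (fun z => c x z) _ y :=
    h.hasFDerivAt.comp y (hasFDerivAt_prodMk_right x y)
  rw [Dy, gradient, h1.fderiv]

lemma hasGradientAt_Dx
    (h : DifferentiableAt ℝ (fun q : EuclideanSpace ℝ (Fin n) × EuclideanSpace ℝ (Fin n) =>
      c q.1 q.2) (x, y)) :
    HasGradientAt (fun z => c z y) (Dx c x y) x :=
  (DifferentiableAt.comp (f := fun z => (z, y)) x h
    (differentiableAt_id.prodMk (differentiableAt_const y)) :
    DifferentiableAt ℝ (fun z => c z y) x).hasGradientAt

lemma hasGradientAt_Dy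
    (h : DifferentiableAt ℝ (fun q : EuclideanSpace ℝ (Fin n) × EuclideanSpace ℝ (Fin n) =>
      c q.1 q.2) (x, y)) :
    HasGradientAt (fun z => c x z) (Dy c x y) y :=
  (h.comp y ((differentiableAt_const x).prodMk differentiableAt_id) :
    DifferentiableAt ℝ (fun z => c x z) y).hasGradientAt

lemma eventually_differentiableAt_cost
    (h : ContDiffAt ℝ 2 (fun q : EuclideanSpace ℝ (Fin n) × EuclideanSpace ℝ (Fin n) =>
      c q.1 q.2) (x, y)) :
    ∀ᶠ q in 𝓝 (x, y), DifferentiableAt ℝ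
      (fun q : EuclideanSpace ℝ (Fin n) × EuclideanSpace ℝ (Fin n) => c q.1 q.2) q := by
  filter_upwards [h.eventually (by simp)] with q hq
  exact hq.differentiableAt (by simp)

lemma contDiffAt_fderiv_cost
    (h : ContDiffAt ℝ 2 (fun q : EuclideanSpace ℝ (Fin n) × EuclideanSpace ℝ (Fin n) =>
      c q.1 q.2) (x, y)) :
    ContDiffAt ℝ 1 (fderiv ℝ (fun q : EuclideanSpace ℝ (Fin n) × EuclideanSpace ℝ (Fin n) =>
      c q.1 q.2)) (x, y) :=
  h.fderiv_right (by norm_num)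

lemma contDiffAt_Dx_snd
    (h : ContDiffAt ℝ 2 (fun q : EuclideanSpace ℝ (Fin n) × EuclideanSpace ℝ (Fin n) =>
      c q.1 q.2) (x, y)) :
    ContDiffAt ℝ 1 (fun y' => Dx c x y') y := by
  have h1 : ContDiffAt ℝ 1 (fun y' => (InnerProductSpace.toDual ℝ
      (EuclideanSpace ℝ (Fin n))).symm ((fderiv ℝ
        (fun q : EuclideanSpace ℝ (Fin n) × EuclideanSpace ℝ (Fin n) =>
        c q.1 q.2) (x, y')).comp (ContinuousLinearMap.inl ℝ _ _))) y := by
    have h2 := (contDiffAt_fderiv_cost h).comp y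
      ((contDiffAt_const (c := x)).prodMk contDiffAt_id)
    exact (LinearIsometryEquiv.contDiff _).contDiffAt.comp y
      (h2.clm_comp contDiffAt_const)
  refine h1.congr_of_eventuallyEq ?_
  have hc : ContinuousAt (fun y' => (x, y')) y := by fun_prop
  filter_upwards [hc.eventually (eventually_differentiableAt_cost h)] with y' hy'
  exact Dx_eq_toDual_symm_fderiv hy'

lemma contDiffAt_Dy_fst
    (h : ContDiffAt ℝ 2 (fun q : EuclideanSpace ℝ (Fin n) × EuclideanSpace ℝ (Fin n) =>
      c q.1 q.2) (x, y)) :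
    ContDiffAt ℝ 1 (fun x' => Dy c x' y) x := by
  have h1 : ContDiffAt ℝ 1 (fun x' => (InnerProductSpace.toDual ℝ
      (EuclideanSpace ℝ (Fin n))).symm ((fderiv ℝ
        (fun q : EuclideanSpace ℝ (Fin n) × EuclideanSpace ℝ (Fin n) =>
        c q.1 q.2) (x', y)).comp (ContinuousLinearMap.inr ℝ _ _))) x := by
    have h2 := (contDiffAt_fderiv_cost h).comp x
      (contDiffAt_id.prodMk (contDiffAt_const (c := y)))
    exact (LinearIsometryEquiv.contDiff _).contDiffAt.comp x
      (h2.clm_comp contDiffAt_const)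
  refine h1.congr_of_eventuallyEq ?_
  have hc : ContinuousAt (fun x' => (x', y)) x := by fun_prop
  filter_upwards [hc.eventually (eventually_differentiableAt_cost h)] with x' hx'
  exact Dy_eq_toDual_symm_fderiv hx'

lemma inner_fderiv_Dx
    (h : ContDiffAt ℝ 2 (fun q : EuclideanSpace ℝ (Fin n) × EuclideanSpace ℝ (Fin n) =>
      c q.1 q.2) (x, y)) (ξ η : EuclideanSpace ℝ (Fin n)) :
    inner ℝ (fderiv ℝ (fun y' => Dx c x y') y η) ξ =
      fderiv ℝ (fderiv ℝ (fun q : EuclideanSpace ℝ (Fin n) × EuclideanSpace ℝ (Fin n) =>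
        c q.1 q.2)) (x, y) (0, η) (ξ, 0) := by
  have hF := ((contDiffAt_fderiv_cost h).differentiableAt (by simp)).hasFDerivAt
  have h1 := (hF.comp y (hasFDerivAt_prodMk_right x y)).clm_apply (hasFDerivAt_const (ξ, 0) y)
  have h2 := ((contDiffAt_Dx_snd h).differentiableAt (by simp)).hasFDerivAt.inner ℝ
    (hasFDerivAt_const ξ y)
  have hc : ContinuousAt (fun y' => (x, y')) y := by fun_prop
  have h3 := h2.congr_of_eventuallyEq
    (f₁ := fun y' => fderiv ℝ (fun q : EuclideanSpace ℝ (Fin n) × EuclideanSpace ℝ (Fin n) =>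
        c q.1 q.2) (x, y') (ξ, 0)) (by
      filter_upwards [hc.eventually (eventually_differentiableAt_cost h)] with y' hy'
      simp [Dx_eq_toDual_symm_fderiv hy'])
  simpa using (DFunLike.congr_fun (h1.unique h3) η).symm

lemma inner_fderiv_Dy
    (h : ContDiffAt ℝ 2 (fun q : EuclideanSpace ℝ (Fin n) × EuclideanSpace ℝ (Fin n) =>
      c q.1 q.2) (x, y)) (ξ η : EuclideanSpace ℝ (Fin n)) :
    inner ℝ (fderiv ℝ (fun x' => Dy c x' y) x ξ) η =
      fderiv ℝ (fderiv ℝ (fun q : EuclideanSpace ℝ (Fin n) × EuclideanSpace ℝ (Fin n) =>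
        c q.1 q.2)) (x, y) (ξ, 0) (0, η) := by
  have hF := ((contDiffAt_fderiv_cost h).differentiableAt (by simp)).hasFDerivAt
  have h1 := (HasFDerivAt.comp (f := fun z => (z, y)) x hF (hasFDerivAt_prodMk_left x y)).clm_apply
    (hasFDerivAt_const ((0 : EuclideanSpace ℝ (Fin n)), η) x)
  have h2 := ((contDiffAt_Dy_fst h).differentiableAt (by simp)).hasFDerivAt.inner ℝ
    (hasFDerivAt_const η x)
  have hc : ContinuousAt (fun x' => (x', y)) x := by fun_prop
  have h3 := h2.congr_of_eventuallyEq
    (f₁ := fun x' => fderiv ℝ (fun q : EuclideanSpace ℝ (Fin n) × EuclideanSpace ℝ (Fin n) =>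
        c q.1 q.2) (x', y) (0, η)) (by
      filter_upwards [hc.eventually (eventually_differentiableAt_cost h)] with x' hx'
      simp [Dy_eq_toDual_symm_fderiv hx'])
  simpa using (DFunLike.congr_fun (h1.unique h3) ξ).symm

/-- The mixed second derivatives `D_x̄ D_x c` and `D_x D_x̄ c` are adjoint to each other. -/
lemma inner_fderiv_Dx_eq_inner_fderiv_Dy
    (h : ContDiffAt ℝ 2 (fun q : EuclideanSpace ℝ (Fin n) × EuclideanSpace ℝ (Fin n) =>
      c q.1 q.2) (x, y)) (ξ η : EuclideanSpace ℝ (Fin n)) :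
    inner ℝ (fderiv ℝ (fun y' => Dx c x y') y η) ξ =
      inner ℝ (fderiv ℝ (fun x' => Dy c x' y) x ξ) η := by
  rw [inner_fderiv_Dx h, inner_fderiv_Dy h]
  exact (h.isSymmSndFDerivAt (by simp)) _ _

lemma surjective_fderiv_Dy
    (h : ContDiffAt ℝ 2 (fun q : EuclideanSpace ℝ (Fin n) × EuclideanSpace ℝ (Fin n) =>
      c q.1 q.2) (x, y))
    (hA : Function.Surjective (fderiv ℝ (fun y' => Dx c x y') y)) :
    Function.Surjective (fderiv ℝ (fun x' => Dy c x' y) x) := by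
  refine LinearMap.injective_iff_surjective.1
    ((injective_iff_map_eq_zero (fderiv ℝ (fun x' => Dy c x' y) x)).2 fun ξ hξ => ?_)
  obtain ⟨η, hη⟩ := hA ξ
  have := inner_fderiv_Dx_eq_inner_fderiv_Dy h ξ η
  rw [hη, hξ, inner_zero_left] at this
  exact inner_self_eq_zero.1 this

lemma map_nhds_Dy
    (h : ContDiffAt ℝ 2 (fun q : EuclideanSpace ℝ (Fin n) × EuclideanSpace ℝ (Fin n) =>
      c q.1 q.2) (x, y))
    (hA : Function.Surjective (fderiv ℝ (fun y' => Dx c x y') y)) :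
    map (fun x' => Dy c x' y) (𝓝 x) = 𝓝 (Dy c x y) :=
  ((contDiffAt_Dy_fst h).hasStrictFDerivAt (by simp)).map_nhds_eq_of_surj
    (LinearMap.range_eq_top.2 (surjective_fderiv_Dy h hA))

/-- If `f a` is the maximum of `f` on some `[a, a + δ)`, then the derivative of `f` at `a` is
nonpositive. -/
lemma HasDerivAt.nonpos_of_eventually_le {f : ℝ → ℝ} {a f' : ℝ} (hf : HasDerivAt f f' a)
    (hle : ∀ᶠ s in 𝓝[>] a, f s ≤ f a) : f' ≤ 0 := by
  refine le_of_tendsto (hasDerivWithinAt_iff_tendsto_slope' (by simp) |>.1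
    (hf.hasDerivWithinAt (s := Ioi a))) ?_
  filter_upwards [hle, self_mem_nhdsWithin] with s hs hs'
  rw [slope_def_field]
  exact div_nonpos_of_nonpos_of_nonneg (by linarith) (by linarith [mem_Ioi.1 hs'])

end CostDerivatives

section MaximumPrinciple

open Filter Topology

variable {n : ℕ} {Ω Ωb : Set (EuclideanSpace ℝ (Fin n))}
  {c : EuclideanSpace ℝ (Fin n) → EuclideanSpace ℝ (Fin n) → ℝ}

/-- First-order consequence of Loeper's maximum principle at the endpoint `y₀` of the `c`-segment
from `y₀` to `y₁` with base point `x`. -/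
lemma inner_Dy_sub_nonpos_of_loeper
    (hΩbo : IsOpen Ωb)
    (hC : ∀ x ∈ Ω, ∀ y ∈ Ωb, ContDiffAt ℝ 2
      (fun q : EuclideanSpace ℝ (Fin n) × EuclideanSpace ℝ (Fin n) => c q.1 q.2) (x, y))
    (hA2 : ∀ x ∈ Ω, ∀ y ∈ Ωb, Function.Bijective (fderiv ℝ (fun y' => Dx c x y') y))
    (hLoeper : ∀ x₀ ∈ Ω, ∀ x ∈ Ω, ∀ y₀ ∈ Ωb, ∀ y₁ ∈ Ωb, ∀ t ∈ Set.Icc (0:ℝ) 1,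
      ∀ yt ∈ Ωb,
        -Dx c x₀ yt = (1 - t) • (-Dx c x₀ y₀) + t • (-Dx c x₀ y₁) →
        -c x yt + c x₀ yt ≤ max (-c x y₀ + c x₀ y₀) (-c x y₁ + c x₀ y₁))
    {x x' y₀ y₁ v : EuclideanSpace ℝ (Fin n)} (hx : x ∈ Ω) (hx' : x' ∈ Ω)
    (hy₀ : y₀ ∈ Ωb) (hy₁ : y₁ ∈ Ωb)
    (hle : -c x' y₁ + c x y₁ ≤ -c x' y₀ + c x y₀)
    (hv : fderiv ℝ (fun y' => Dx c x y') y₀ v = Dx c x y₁ - Dx c x y₀) :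
    inner ℝ (Dy c x y₀ - Dy c x' y₀) v ≤ 0 := by
  let A : EuclideanSpace ℝ (Fin n) ≃L[ℝ] EuclideanSpace ℝ (Fin n) :=
    ContinuousLinearEquiv.ofBijective (fderiv ℝ (fun y' => Dx c x y') y₀)
      (LinearMap.ker_eq_bot.2 (hA2 x hx y₀ hy₀).1) (LinearMap.range_eq_top.2 (hA2 x hx y₀ hy₀).2)
  have hA : HasStrictFDerivAt (fun y' => Dx c x y')
      (A : EuclideanSpace ℝ (Fin n) →L[ℝ] EuclideanSpace ℝ (Fin n)) y₀ :=
    (contDiffAt_Dx_snd (hC x hx y₀ hy₀)).hasStrictFDerivAt (by simp)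
  let w := Dx c x y₁ - Dx c x y₀
  have hAw : A.symm w = v := by
    rw [ContinuousLinearEquiv.symm_apply_eq]
    exact hv.symm
  have hline : HasDerivAt (fun s : ℝ => Dx c x y₀ + s • w) w 0 := by
    simpa using ((hasDerivAt_id (0 : ℝ)).smul_const w).const_add (Dx c x y₀)
  have hline0 : Dx c x y₀ + (0 : ℝ) • w = Dx c x y₀ := by simp
  let φ := hA.localInverse
  have hφ0 : φ (Dx c x y₀) = y₀ := hA.localInverse_apply_image
  have hγ : HasDerivAt (fun s : ℝ => φ (Dx c x y₀ + s • w)) v 0 := by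
    have h1 : HasFDerivAt φ (A.symm : EuclideanSpace ℝ (Fin n) →L[ℝ] EuclideanSpace ℝ (Fin n))
        (Dx c x y₀ + (0 : ℝ) • w) := by
      rw [hline0]
      exact hA.to_localInverse.hasFDerivAt
    have h2 := h1.comp_hasDerivAt (0 : ℝ) hline
    rwa [ContinuousLinearEquiv.coe_coe, hAw] at h2
  have hγ0 : φ (Dx c x y₀ + (0 : ℝ) • w) = y₀ := by rw [hline0, hφ0]
  have hcost : ∀ z ∈ Ω, HasDerivAt (fun s : ℝ => c z (φ (Dx c x y₀ + s • w)))
      (inner ℝ (Dy c z y₀) v) 0 := by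
    intro z hz
    have h1 : HasFDerivAt (fun y => c z y)
        (InnerProductSpace.toDual ℝ (EuclideanSpace ℝ (Fin n)) (Dy c z y₀))
        (φ (Dx c x y₀ + (0 : ℝ) • w)) := by
      rw [hγ0]
      exact (hasGradientAt_Dy ((hC z hz y₀ hy₀).differentiableAt (by simp))).hasFDerivAt
    exact h1.comp_hasDerivAt (0 : ℝ) hγ
  have hmem : ∀ᶠ s : ℝ in 𝓝 0, φ (Dx c x y₀ + s • w) ∈ Ωb :=
    hγ.continuousAt.preimage_mem_nhds (by simpa only [hγ0] using hΩbo.mem_nhds hy₀)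
  have hinv : ∀ᶠ s : ℝ in 𝓝 0, Dx c x (φ (Dx c x y₀ + s • w)) = Dx c x y₀ + s • w :=
    hline.continuousAt.eventually (p := fun q => Dx c x (φ q) = q)
      (by simpa only [hline0] using hA.eventually_right_inverse)
  rw [inner_sub_left, sub_eq_neg_add]
  refine ((hcost x' hx').neg.add (hcost x hx)).nonpos_of_eventually_le ?_
  filter_upwards [nhdsWithin_le_nhds hmem, nhdsWithin_le_nhds hinv,
    Ioo_mem_nhdsGT (zero_lt_one' ℝ)] with s hs hs' hs01
  have := hLoeper x hx x' hx' y₀ hy₀ y₁ hy₁ s ⟨hs01.1.le, hs01.2.le⟩ _ hs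
    (by rw [hs']; simp only [w]; module)
  rw [max_eq_left hle] at this
  simpa [hφ0] using this

/-- Loeper's maximum principle along segments in the first variable: `-c(·,y) + c(·,y₀)` is
quasiconvex in the coordinate `D_x̄ c(·,y₀)`. -/
lemma le_max_of_loeper
    (hΩbo : IsOpen Ωb)
    (hC : ∀ x ∈ Ω, ∀ y ∈ Ωb, ContDiffAt ℝ 2
      (fun q : EuclideanSpace ℝ (Fin n) × EuclideanSpace ℝ (Fin n) => c q.1 q.2) (x, y))
    (hA1y : ∀ y ∈ Ωb, Set.InjOn (fun x => -Dy c x y) Ω)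
    (hA2 : ∀ x ∈ Ω, ∀ y ∈ Ωb, Function.Bijective (fderiv ℝ (fun y' => Dx c x y') y))
    (hLoeper : ∀ x₀ ∈ Ω, ∀ x ∈ Ω, ∀ y₀ ∈ Ωb, ∀ y₁ ∈ Ωb, ∀ t ∈ Set.Icc (0:ℝ) 1,
      ∀ yt ∈ Ωb,
        -Dx c x₀ yt = (1 - t) • (-Dx c x₀ y₀) + t • (-Dx c x₀ y₁) →
        -c x yt + c x₀ yt ≤ max (-c x y₀ + c x₀ y₀) (-c x y₁ + c x₀ y₁))
    {x₀ x₁ x y₀ y : EuclideanSpace ℝ (Fin n)} (hx₀ : x₀ ∈ Ω) (hx₁ : x₁ ∈ Ω) (hx : x ∈ Ω)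
    (hy₀ : y₀ ∈ Ωb) (hy : y ∈ Ωb) {t : ℝ} (ht : t ∈ Set.Ioo (0:ℝ) 1)
    (hseg : Dy c x y₀ = (1 - t) • Dy c x₀ y₀ + t • Dy c x₁ y₀) :
    -c x y + c x y₀ ≤ max (-c x₀ y + c x₀ y₀) (-c x₁ y + c x₁ y₀) := by
  by_contra! hlt
  obtain ⟨hlt₀, hlt₁⟩ := max_lt_iff.1 hlt
  have hcont : ∀ z ∈ Ω, ContinuousAt (fun y' => c z y') y := fun z hz =>
    (hasGradientAt_Dy ((hC z hz y hy).differentiableAt (by simp))).differentiableAt.continuousAt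
  have hnear : ∀ z ∈ Ω, -c z y + c z y₀ < -c x y + c x y₀ →
      ∀ᶠ y' in 𝓝 y, -c z y' + c z y₀ < -c x y' + c x y₀ := fun z hz h =>
    ((hcont z hz).neg.add continuousAt_const).eventually_lt
      ((hcont x hx).neg.add continuousAt_const) h
  let A : EuclideanSpace ℝ (Fin n) ≃L[ℝ] EuclideanSpace ℝ (Fin n) :=
    ContinuousLinearEquiv.ofBijective (fderiv ℝ (fun y' => Dx c x y') y₀)
      (LinearMap.ker_eq_bot.2 (hA2 x hx y₀ hy₀).1) (LinearMap.range_eq_top.2 (hA2 x hx y₀ hy₀).2)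
  have hzero : (fun y' => inner ℝ (Dy c x y₀ - Dy c x₁ y₀) (A.symm (Dx c x y' - Dx c x y₀)))
      =ᶠ[𝓝 y] fun _ => 0 := by
    filter_upwards [hnear x₀ hx₀ hlt₀, hnear x₁ hx₁ hlt₁, hΩbo.mem_nhds hy] with y' h0 h1 hy'
    have hv : fderiv ℝ (fun y' => Dx c x y') y₀ (A.symm (Dx c x y' - Dx c x y₀)) =
        Dx c x y' - Dx c x y₀ := A.apply_symm_apply _
    have i0 := inner_Dy_sub_nonpos_of_loeper hΩbo hC hA2 hLoeper hx hx₀ hy₀ hy' (by linarith) hv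
    have i1 := inner_Dy_sub_nonpos_of_loeper hΩbo hC hA2 hLoeper hx hx₁ hy₀ hy' (by linarith) hv
    have hcomb : t • (Dy c x y₀ - Dy c x₁ y₀) = -((1 - t) • (Dy c x y₀ - Dy c x₀ y₀)) := by
      rw [hseg]; module
    have := congrArg
      (fun z => (inner ℝ z (A.symm (Dx c x y' - Dx c x y₀)) : ℝ)) hcomb
    simp only [inner_neg_left, real_inner_smul_left] at this
    nlinarith [ht.1, ht.2]
  have hderiv : HasFDerivAt (fun y' => A.symm (Dx c x y' - Dx c x y₀)) _ y :=
    A.symm.hasFDerivAt.comp y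
      (((contDiffAt_Dx_snd (hC x hx y hy)).differentiableAt (by simp)).hasFDerivAt.sub_const _)
  have hderiv0 := ((hasFDerivAt_const (Dy c x y₀ - Dy c x₁ y₀) y).inner ℝ hderiv).unique
    ((hasFDerivAt_const (0 : ℝ) y).congr_of_eventuallyEq hzero)
  obtain ⟨z, hz⟩ := (hA2 x hx y hy).2 (A (Dy c x y₀ - Dy c x₁ y₀))
  have h0 := DFunLike.congr_fun hderiv0 z
  simp [hz] at h0
  have hxx₁ : x = x₁ := hA1y y₀ hy₀ hx hx₁ (by simpa using sub_eq_zero.1 h0)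
  rw [hxx₁] at hlt₁
  exact lt_irrefl _ hlt₁

end MaximumPrinciple

section CConvex

open Filter Topology

variable {n : ℕ} {Ω Ωb : Set (EuclideanSpace ℝ (Fin n))}
  {c : EuclideanSpace ℝ (Fin n) → EuclideanSpace ℝ (Fin n) → ℝ}
  {u : EuclideanSpace ℝ (Fin n) → ℝ}

/-- A `c`-convex function is upper semicontinuous when the cost is uniformly continuous. -/
lemma upperSemicontinuousWithinAt_of_cConvex
    (hc : UniformContinuousOn
      (fun q : EuclideanSpace ℝ (Fin n) × EuclideanSpace ℝ (Fin n) => c q.1 q.2) (Ω ×ˢ Ωb))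
    (hu : ∀ x₀ ∈ Ω, ∃ y₀ ∈ Ωb, ∃ l : ℝ,
      u x₀ = -c x₀ y₀ + l ∧ ∀ x ∈ Ω, -c x y₀ + l ≤ u x)
    {x₁ : EuclideanSpace ℝ (Fin n)} (hx₁ : x₁ ∈ Ω) :
    UpperSemicontinuousWithinAt u Ω x₁ := by
  intro b hb
  obtain ⟨δ, hδ, h⟩ := Metric.uniformContinuousOn_iff.1 hc (b - u x₁) (sub_pos.2 hb)
  filter_upwards [nhdsWithin_le_nhds (Metric.ball_mem_nhds x₁ hδ), self_mem_nhdsWithin]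
    with x hxδ hx
  obtain ⟨y, hy, l, hl, hle⟩ := hu x hx
  have h1 := h (x, y) ⟨hx, hy⟩ (x₁, y) ⟨hx₁, hy⟩ (by simpa [Prod.dist_eq] using hxδ)
  have h2 := hle x₁ hx₁
  rw [Real.dist_eq, abs_lt] at h1
  linarith [h1.1]

/-- If the `c`-convex function `u` is such that `u + c(·,y₀)` has a local maximum at `x`, then `y₀ ∈ ∂_c u(x)`. -/
lemma mem_csub_of_eventually_le
    (hC : ∀ x ∈ Ω, ∀ y ∈ Ωb, DifferentiableAt ℝ
      (fun q : EuclideanSpace ℝ (Fin n) × EuclideanSpace ℝ (Fin n) => c q.1 q.2) (x, y))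
    (hΩo : IsOpen Ω)
    (hA1x : ∀ x ∈ Ω, Set.InjOn (fun y => -Dx c x y) Ωb)
    (hu : ∀ x₀ ∈ Ω, ∃ y₀ ∈ Ωb, ∃ l : ℝ,
      u x₀ = -c x₀ y₀ + l ∧ ∀ x ∈ Ω, -c x y₀ + l ≤ u x)
    {x y₀ : EuclideanSpace ℝ (Fin n)} (hx : x ∈ Ω) (hy₀ : y₀ ∈ Ωb)
    (hle : ∀ᶠ z in 𝓝 x, u z + c z y₀ ≤ u x + c x y₀) :
    y₀ ∈ csub Ω Ωb c u x := by
  obtain ⟨y, hy, l, hl, hsupp⟩ := hu x hx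
  have hmax : IsLocalMax (fun z => c z y₀ - c z y) x := by
    filter_upwards [hle, hΩo.mem_nhds hx] with z hz hzΩ
    linarith [hsupp z hzΩ]
  have hgrad := hmax.hasFDerivAt_eq_zero
    ((hasGradientAt_Dx (hC x hx y₀ hy₀)).hasFDerivAt.sub
      (hasGradientAt_Dx (hC x hx y hy)).hasFDerivAt)
  rw [← map_sub, LinearIsometryEquiv.map_eq_zero_iff, sub_eq_zero] at hgrad
  have hyy₀ : y₀ = y := hA1x x hx hy₀ hy (by simpa using hgrad)
  subst hyy₀
  exact ⟨hy, fun z hz => by linarith [hsupp z hz]⟩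

end CConvex

/-- Corollary 2.2 of the paper (local-to-global, for domains in `ℝⁿ`): under (A0)–(A2),
`c`-convexity of `Ω` with respect to `Ω̄` and Loeper's maximum principle, if the function
`x ↦ u(x) + c(x,x̄₀) − λ₀` has a local minimum (within `Ω`) at `x₀ ∈ Ω`, then
`x̄₀ ∈ ∂_c u(x₀)`. -/
theorem local_min_to_global_csupport
    (n : ℕ) (Ω Ωb : Set (EuclideanSpace ℝ (Fin n)))
    (hΩo : IsOpen Ω) (hΩbd : Bornology.IsBounded Ω)
    (hΩbo : IsOpen Ωb) (hΩbbd : Bornology.IsBounded Ωb)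
    (c : EuclideanSpace ℝ (Fin n) → EuclideanSpace ℝ (Fin n) → ℝ)
    -- (A0): `c` is C⁴ on a neighborhood of the closure of `Ω × Ω̄`
    (hA0 : ∃ U : Set (EuclideanSpace ℝ (Fin n) × EuclideanSpace ℝ (Fin n)),
      IsOpen U ∧ closure (Ω ×ˢ Ωb) ⊆ U ∧
        ContDiffOn ℝ 4 (fun q : EuclideanSpace ℝ (Fin n) × EuclideanSpace ℝ (Fin n) =>
          c q.1 q.2) U)
    -- (A1), twist
    (hA1x : ∀ x ∈ Ω, Set.InjOn (fun y => -Dx c x y) Ωb)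
    (hA1y : ∀ y ∈ Ωb, Set.InjOn (fun x => -Dy c x y) Ω)
    -- (A2), nondegeneracy
    (hA2 : ∀ x ∈ Ω, ∀ y ∈ Ωb,
      Function.Bijective (fderiv ℝ (fun y' => Dx c x y') y))
    -- `Ω` is `c`-convex with respect to `Ω̄`
    (hccΩ : ∀ y ∈ Ωb, Convex ℝ ((fun x => -Dy c x y) '' Ω))
    -- Loeper's maximum principle
    (hLoeper : ∀ x₀ ∈ Ω, ∀ x ∈ Ω, ∀ y₀ ∈ Ωb, ∀ y₁ ∈ Ωb, ∀ t ∈ Set.Icc (0:ℝ) 1,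
      ∀ yt ∈ Ωb,
        -Dx c x₀ yt = (1 - t) • (-Dx c x₀ y₀) + t • (-Dx c x₀ y₁) →
        -c x yt + c x₀ yt ≤ max (-c x y₀ + c x₀ y₀) (-c x y₁ + c x₀ y₁))
    (u : EuclideanSpace ℝ (Fin n) → ℝ)
    -- `u` is `c`-convex
    (hu : ∀ x₀ ∈ Ω, ∃ y₀ ∈ Ωb, ∃ l : ℝ,
      u x₀ = -c x₀ y₀ + l ∧ ∀ x ∈ Ω, -c x y₀ + l ≤ u x) :
    ∀ xb₀ ∈ Ωb, ∀ l₀ : ℝ, ∀ x₀ ∈ Ω,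
      IsLocalMinOn (fun x => u x + c x xb₀ - l₀) Ω x₀ →
      xb₀ ∈ csub Ω Ωb c u x₀ := by
  intro y₀ hy₀ l₀ x₀ hx₀ hmin
  obtain ⟨U, hUo, hU, hcU⟩ := hA0
  have hC : ∀ x ∈ Ω, ∀ y ∈ Ωb, ContDiffAt ℝ 2
      (fun q : EuclideanSpace ℝ (Fin n) × EuclideanSpace ℝ (Fin n) => c q.1 q.2) (x, y) :=
    fun x hx y hy => (hcU.contDiffAt (hUo.mem_nhds (hU (subset_closure ⟨hx, hy⟩)))).of_le
      (by norm_num)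
  have hunif : UniformContinuousOn
      (fun q : EuclideanSpace ℝ (Fin n) × EuclideanSpace ℝ (Fin n) => c q.1 q.2) (Ω ×ˢ Ωb) :=
    ((hΩbd.prod hΩbbd).isCompact_closure.uniformContinuousOn_of_continuous
      (hcU.continuousOn.mono hU)).mono subset_closure
  refine ⟨hy₀, ?_⟩
  by_contra! hneg
  obtain ⟨x₁, hx₁, hlt⟩ := hneg
  have hmin' : ∀ᶠ x in nhds x₀, x ∈ Ω ∧ u x₀ + c x₀ y₀ ≤ u x + c x y₀ := by
    rw [IsLocalMinOn, IsMinFilter, hΩo.nhdsWithin_eq hx₀] at hmin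
    filter_upwards [hmin, hΩo.mem_nhds hx₀] with x hx hxΩ
    exact ⟨hxΩ, by linarith⟩
  have hlow : ∀ᶠ x in nhds x₁, x ∈ Ω ∧ u x + c x y₀ < u x₀ + c x₀ y₀ := by
    have hcx₁ : ContinuousAt (fun x => c x y₀) x₁ :=
      (hasGradientAt_Dx
        ((hC x₁ hx₁ y₀ hy₀).differentiableAt (by simp))).differentiableAt.continuousAt
    have husc := upperSemicontinuousWithinAt_of_cConvex hunif hu hx₁
    have hG := (husc.add hcx₁.continuousWithinAt.upperSemicontinuousWithinAt)
      (u x₀ + c x₀ y₀) (by linarith)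
    rw [hΩo.nhdsWithin_eq hx₁] at hG
    filter_upwards [hG, hΩo.mem_nhds hx₁] with x hx hxΩ
    exact ⟨hxΩ, hx⟩
  -- a point `x` near `x₀` in the interior of the segment towards `x₁`
  obtain ⟨t, ht, x, ⟨hx, hxge⟩, hxt⟩ : ∃ t ∈ Set.Ioo (0:ℝ) 1, ∃ x,
      (x ∈ Ω ∧ u x₀ + c x₀ y₀ ≤ u x + c x y₀) ∧
        Dy c x y₀ = (1 - t) • Dy c x₀ y₀ + t • Dy c x₁ y₀ := by
    have himg := Filter.image_mem_map (m := fun x' => Dy c x' y₀) hmin'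
    rw [map_nhds_Dy (hC x₀ hx₀ y₀ hy₀) (hA2 x₀ hx₀ y₀ hy₀).2] at himg
    have hcont : ContinuousAt
        (fun t : ℝ => (1 - t) • Dy c x₀ y₀ + t • Dy c x₁ y₀) 0 := by fun_prop
    have hev := hcont.preimage_mem_nhds (by simpa using himg)
    obtain ⟨t, ⟨x, hx, hxt⟩, ht⟩ := Filter.nonempty_of_mem (Filter.inter_mem
      (nhdsWithin_le_nhds hev) (Ioo_mem_nhdsGT (zero_lt_one' ℝ)))
    exact ⟨t, ht, x, hx, hxt⟩
  -- all points near `x` lie on a segment from `x₀` to a point near `x₁`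
  have hle : ∀ᶠ z in nhds x, u z + c z y₀ ≤ u x + c x y₀ := by
    have himg := Filter.image_mem_map (m := fun x' => Dy c x' y₀) hlow
    rw [map_nhds_Dy (hC x₁ hx₁ y₀ hy₀) (hA2 x₁ hx₁ y₀ hy₀).2] at himg
    have hDy : ContinuousAt (fun z => Dy c z y₀) x :=
      (contDiffAt_Dy_fst (hC x hx y₀ hy₀)).continuousAt
    have hcont : ContinuousAt
        (fun z => t⁻¹ • (Dy c z y₀ - (1 - t) • Dy c x₀ y₀)) x := by fun_prop
    have hend : t⁻¹ • (Dy c x y₀ - (1 - t) • Dy c x₀ y₀) = Dy c x₁ y₀ := by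
      rw [hxt, add_sub_cancel_left, inv_smul_smul₀ ht.1.ne']
    filter_upwards [hcont.preimage_mem_nhds (by simpa only [hend] using himg),
      hΩo.mem_nhds hx] with z ⟨x', ⟨hx', hlt'⟩, hz⟩ hzΩ
    obtain ⟨y, hy, l, hl, hsupp⟩ := hu z hzΩ
    have hseg : Dy c z y₀ = (1 - t) • Dy c x₀ y₀ + t • Dy c x' y₀ := by
      rw [show Dy c x' y₀ = _ from hz, smul_inv_smul₀ ht.1.ne', add_sub_cancel]
    have h0 := hsupp x₀ hx₀
    have h1 := hsupp x' hx'
    rcases le_max_iff.1 (le_max_of_loeper hΩbo hC hA1y hA2 hLoeper hx₀ hx' hzΩ hy₀ hy ht hseg)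
      with h | h <;> linarith
  have hxsub := mem_csub_of_eventually_le
    (fun x hx y hy => (hC x hx y hy).differentiableAt (by simp)) hΩo hA1x hu hx hy₀ hle
  linarith [hxsub.2 x₁ hx₁]
end
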